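/- Let G be a bridgeless finite multigraph and let W(G) be the set of vertices of G of degree larger than 3. If G − W(G) has a connected component G₀ such that every vertex of W(G) has a neighbour in V(G₀), then F(G,q) ≠ 0 for all real q with 1 < q < 2. -/

import Mathlib

/-- A finite multigraph on vertex type `V` with edge type `E`: each edge `e` has two
(possibly equal) endpoints `fst e` and `snd e`. -/
structure Multigraph (V E : Type) where
  fst : E → V
  snd : E → V

namespace Multigraph

variable {V E : Type}

/-- `a` and `b` are joined by some edge belonging to the edge set `F`. -/
def edgeRelOn (G : Multigraph V E) (F : Set E) (a b : V) : Prop :=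
  ∃ e ∈ F, (G.fst e = a ∧ G.snd e = b) ∨ (G.fst e = b ∧ G.snd e = a)

/-- Reachability in the spanning subgraph `(V, F)`. -/
def Reach (G : Multigraph V E) (F : Set E) : V → V → Prop :=
  Relation.EqvGen (G.edgeRelOn F)

/-- The setoid on `V` whose classes are the connected components of the
spanning subgraph `(V, F)`. -/
def reachSetoid (G : Multigraph V E) (F : Set E) : Setoid V :=
  Relation.EqvGen.setoid (G.edgeRelOn F)

/-- The number of connected components of the spanning subgraph `(V, F)`. -/
noncomputable def ncomp (G : Multigraph V E) (F : Set E) : ℕ :=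
  Nat.card (Quotient (G.reachSetoid F))

/-- The number of connected components of `G`. -/
noncomputable def numComponents (G : Multigraph V E) : ℕ :=
  G.ncomp Set.univ

/-- `G` is connected. -/
def Connected (G : Multigraph V E) : Prop :=
  G.numComponents = 1

/-- An edge is a bridge if deleting it increases the number of connected components. -/
def IsBridge (G : Multigraph V E) (e : E) : Prop :=
  G.numComponents < G.ncomp {e' | e' ≠ e}

/-- `G` has no bridge. -/
def Bridgeless (G : Multigraph V E) : Prop :=
  ∀ e, ¬ G.IsBridge e

/-- `G` has no loops. -/
def Loopless (G : Multigraph V E) : Prop :=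
  ∀ e, G.fst e ≠ G.snd e

/-- Deleting a set `S` of vertices (and all edges meeting `S`). -/
def deleteVerts (G : Multigraph V E) (S : Set V) :
    Multigraph {v // v ∉ S} {e // G.fst e ∉ S ∧ G.snd e ∉ S} where
  fst := fun e => ⟨G.fst e.1, e.2.1⟩
  snd := fun e => ⟨G.snd e.1, e.2.2⟩

/-- A cut-vertex: a vertex whose deletion increases the number of components. -/
def IsCutVertex (G : Multigraph V E) (x : V) : Prop :=
  G.numComponents < (G.deleteVerts {x}).numComponents

/-- A graph is non-separable if it has at most one vertex and at most one edge, or it is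
connected, loopless and has no cut-vertex. -/
def NonSeparable (G : Multigraph V E) : Prop :=
  (Nat.card V ≤ 1 ∧ Nat.card E ≤ 1) ∨
    (G.Connected ∧ G.Loopless ∧ ∀ x, ¬ G.IsCutVertex x)

/-- The degree of a vertex, counted with edge multiplicity; a loop contributes `2`. -/
noncomputable def degree (G : Multigraph V E) (v : V) : ℕ :=
  Nat.card {e | G.fst e = v} + Nat.card {e | G.snd e = v}

/-- The flow polynomial `F(G,q) = ∑_{E'⊆E} (−1)^{|E|−|E'|} q^{|E'|+c(E')−|V|}`,
where `c(E')` is the number of connected components of the spanning subgraph `(V,E')`. -/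
noncomputable def flowPoly (G : Multigraph V E) [Finite V] [Finite E] : Polynomial ℝ :=
  letI : Fintype E := Fintype.ofFinite E
  ∑ E' : Finset E, (-1 : Polynomial ℝ) ^ (Nat.card E - E'.card) *
    Polynomial.X ^ (E'.card + G.ncomp ↑E' - Nat.card V)

/-- A subgraph of a multigraph: a set of vertices and a set of edges with both
endpoints among those vertices. -/
structure Subgraph (G : Multigraph V E) where
  verts : Set V
  edges : Set E
  fst_mem : ∀ ⦃e⦄, e ∈ edges → G.fst e ∈ verts
  snd_mem : ∀ ⦃e⦄, e ∈ edges → G.snd e ∈ verts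

/-- A subgraph, viewed as a multigraph in its own right. -/
def Subgraph.toMultigraph {G : Multigraph V E} (H : G.Subgraph) :
    Multigraph H.verts H.edges where
  fst := fun e => ⟨G.fst e.1, H.fst_mem e.2⟩
  snd := fun e => ⟨G.snd e.1, H.snd_mem e.2⟩

/-- `H` is a connected component of `G`: its vertex set is the set of vertices reachable
from some vertex, and its edges are all the edges of `G` joining its vertices. -/
def IsComponent {G : Multigraph V E} (H : G.Subgraph) : Prop :=
  (∃ v ∈ H.verts, ∀ u, u ∈ H.verts ↔ G.Reach Set.univ v u) ∧
    ∀ e, e ∈ H.edges ↔ (G.fst e ∈ H.verts ∧ G.snd e ∈ H.verts)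

/-- `H` is a block of `G`: a maximal non-separable subgraph. -/
def IsBlock {G : Multigraph V E} (H : G.Subgraph) : Prop :=
  H.toMultigraph.NonSeparable ∧
    ∀ H' : G.Subgraph, H'.toMultigraph.NonSeparable →
      H.verts ⊆ H'.verts → H.edges ⊆ H'.edges → H' = H

/-- A trivial block: a single vertex and no edges. -/
def Subgraph.IsTrivial {G : Multigraph V E} (H : G.Subgraph) : Prop :=
  (∃ v, H.verts = {v}) ∧ H.edges = ∅

/-- An orientation of a multigraph: each edge is given a tail and a head,
consistent with its two endpoints. -/
structure Orientation (G : Multigraph V E) where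
  tail : E → V
  head : E → V
  consistent : ∀ e, (tail e = G.fst e ∧ head e = G.snd e) ∨
    (tail e = G.snd e ∧ head e = G.fst e)

open Classical in
/-- A `Γ`-flow on an orientation `D`: at every vertex, the sum of the values on
the arcs with that tail equals the sum of the values on the arcs with that head. -/
noncomputable def Orientation.IsFlow {G : Multigraph V E} [Fintype E]
    (D : G.Orientation) {Γ : Type} [AddCommGroup Γ] (φ : E → Γ) : Prop :=
  ∀ v : V, ∑ e ∈ Finset.univ.filter (fun e => D.tail e = v), φ e =
    ∑ e ∈ Finset.univ.filter (fun e => D.head e = v), φ e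

/-- Deleting an edge. -/
def deleteEdge (G : Multigraph V E) (e₀ : E) : Multigraph V {e // e ≠ e₀} where
  fst := fun e => G.fst e.1
  snd := fun e => G.snd e.1

/-- Adding a new edge joining `x` and `y`. -/
def addEdge (G : Multigraph V E) (x y : V) : Multigraph V (E ⊕ Unit) where
  fst := Sum.elim G.fst fun _ => x
  snd := Sum.elim G.snd fun _ => y

/-- Contracting a set `F` of edges: vertices joined through `F` are identified,
and the edges of `F` are removed. -/
def contract (G : Multigraph V E) (F : Set E) :
    Multigraph (Quotient (G.reachSetoid F)) {e // e ∉ F} where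
  fst := fun e => Quotient.mk _ (G.fst e.1)
  snd := fun e => Quotient.mk _ (G.snd e.1)

/-- The number of proper colourings of the vertices of `G` with `n` colours. -/
noncomputable def properColorings (G : Multigraph V E) (n : ℕ) : ℕ :=
  Nat.card {f : V → Fin n // ∀ e, f (G.fst e) ≠ f (G.snd e)}

/-- An isomorphism of multigraphs. -/
structure Iso {V' E' : Type} (G : Multigraph V E) (G' : Multigraph V' E') where
  vmap : V ≃ V'
  emap : E ≃ E'
  ends : ∀ e, (G'.fst (emap e) = vmap (G.fst e) ∧ G'.snd (emap e) = vmap (G.snd e)) ∨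
    (G'.fst (emap e) = vmap (G.snd e) ∧ G'.snd (emap e) = vmap (G.fst e))

open Classical in
/-- Subdividing the edge `e₀`: it is replaced by a path of length two through a new vertex. -/
noncomputable def subdivide (G : Multigraph V E) (e₀ : E) :
    Multigraph (V ⊕ Unit) (E ⊕ Unit) where
  fst := Sum.elim (fun e => Sum.inl (G.fst e)) fun _ => Sum.inr ()
  snd := Sum.elim (fun e => if e = e₀ then Sum.inr () else Sum.inl (G.snd e))
    fun _ => Sum.inl (G.snd e₀)

/-- `G` is a subdivision of `H`. -/
inductive IsSubdivisionOf :
    {V E V' E' : Type} → Multigraph V E → Multigraph V' E' → Prop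
  | of_iso {V E V' E'} {G : Multigraph V E} {H : Multigraph V' E'} :
      Iso G H → IsSubdivisionOf G H
  | step {V E V' E'} {G : Multigraph V E} {H : Multigraph V' E'} (e : E) :
      IsSubdivisionOf G H → IsSubdivisionOf (G.subdivide e) H
  | iso_left {V₁ E₁ V₂ E₂ V' E'} {G₁ : Multigraph V₁ E₁} {G₂ : Multigraph V₂ E₂}
      {H : Multigraph V' E'} :
      Iso G₁ G₂ → IsSubdivisionOf G₂ H → IsSubdivisionOf G₁ H

/-- A multigraph is 3-connected if it has at least 4 vertices and remains connected
after deleting any set of fewer than 3 vertices. -/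
def ThreeConnected (G : Multigraph V E) : Prop :=
  4 ≤ Nat.card V ∧ ∀ S : Set V, S.ncard < 3 → (G.deleteVerts S).Connected

/-- `G` is (isomorphic to) the multigraph `Z_k` with two vertices joined by `k`
parallel edges. -/
def IsZk (G : Multigraph V E) (k : ℕ) : Prop :=
  Nat.card V = 2 ∧ Nat.card E = k ∧ G.Loopless

/-- `G` is essentially 3-connected: a subdivision of a 3-connected graph,
or `Z_k` for some `k ≥ 3`. -/
def EssentiallyThreeConnected (G : Multigraph V E) : Prop :=
  (∃ (V' E' : Type) (H : Multigraph V' E'), H.ThreeConnected ∧ G.IsSubdivisionOf H) ∨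
    ∃ k, 3 ≤ k ∧ G.IsZk k

end Multigraph

/-!
Expanding the flow polynomial over edge subsets, `(-1) ^ |E| * F(G, q)` is a sum that depends only
on the incidence vectors of the edges. It is multiplicative over pieces that share at most one
vertex, and a loop contributes the factor `1 - q`, so it suffices to treat non-separable pieces;
each of them inherits a connected set `S` of vertices of degree at most three that dominates the
vertices of larger degree.

For such a piece with at least two edges a sign statement holds: `(-1) ^ (rank + 1)` times the sum
is positive for `1 < q < 2`. This is proved by induction on the number of edges, with `S` chosen
minimal. If `S` is a single vertex meeting every edge, the piece consists of parallel edges and the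
sum is explicit. Otherwise some edge `e = ab` avoids `S` while `a` has a neighbour in `S`.
If `e` has a parallel edge, or if `{a, b}` is a cut, a three-term identity splits the sum over the
two sides. If deleting `e` creates a cut vertex, both sides are smaller pieces with `e` re-attached
to that vertex. In the remaining case both the deletion and the contraction of `e` are
non-separable and still dominated, and deletion–contraction adds two positive terms.
-/

theorem iff_of_eqvGen {α : Type*} {r : α → α → Prop} {p : α → Prop}
    (hr : ∀ x y, r x y → (p x ↔ p y)) {x y : α} (h : Relation.EqvGen r x y) : p x ↔ p y := by
  induction h with
  | rel x y h => exact hr x y h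
  | refl x => exact Iff.rfl
  | symm x y _ ih => exact ih.symm
  | trans x y z _ _ hxy hyz => exact hxy.trans hyz

theorem sum_powerset_union_of_disjoint {E R : Type*} [DecidableEq E] [AddCommMonoid R]
    {A₁ A₂ : Finset E} (h : Disjoint A₁ A₂) (f : Finset E → R) :
    ∑ B ∈ (A₁ ∪ A₂).powerset, f B = ∑ B₁ ∈ A₁.powerset, ∑ B₂ ∈ A₂.powerset, f (B₁ ∪ B₂) := by
  induction A₁ using Finset.induction_on generalizing f with
  | empty => simp
  | insert a A ha ih =>
    rw [Finset.disjoint_insert_left] at h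
    rw [Finset.insert_union, Finset.sum_powerset_insert (by simp [ha, h.1]), ih h.2, ih h.2,
      Finset.sum_powerset_insert ha]
    simp only [Finset.insert_union]

theorem add_mem_sup_iff_of_disjoint {R M : Type*} [Ring R] [AddCommGroup M] [Module R M]
    {P₁ P₂ Q₁ Q₂ : Submodule R M} (hP : Disjoint P₁ P₂) (h₁ : Q₁ ≤ P₁) (h₂ : Q₂ ≤ P₂) {x₁ x₂ : M}
    (hx₁ : x₁ ∈ P₁) (hx₂ : x₂ ∈ P₂) : x₁ + x₂ ∈ Q₁ ⊔ Q₂ ↔ x₁ ∈ Q₁ ∧ x₂ ∈ Q₂ := by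
  refine ⟨fun h => ?_, fun h => Submodule.add_mem_sup h.1 h.2⟩
  obtain ⟨y₁, hy₁, y₂, hy₂, hy⟩ := Submodule.mem_sup.1 h
  have hdiff : x₁ - y₁ = y₂ - x₂ := by rw [sub_eq_sub_iff_add_eq_add, hy.symm, add_comm]
  have hzero : x₁ - y₁ = 0 := Submodule.disjoint_def.1 hP _ (P₁.sub_mem hx₁ (h₁ hy₁))
    (hdiff ▸ P₂.sub_mem (h₂ hy₂) hx₂)
  rw [hzero, eq_comm, sub_eq_zero] at hdiff
  exact ⟨sub_eq_zero.1 hzero ▸ hy₁, hdiff ▸ hy₂⟩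

/-! ### Subset expansions over vector configurations -/

namespace VectorConfiguration

variable {E F M N : Type*} (K : Type*) [Field K] [AddCommGroup M] [Module K M]
  [AddCommGroup N] [Module K N]

/-- The subspace spanned by the part of the vector configuration `u` indexed by `B`. -/
def span (u : E → M) (B : Finset E) : Submodule K M := Submodule.span K (u '' B)

/-- The rank of the index set `B` in the matroid of the vector configuration `u`. -/
noncomputable def rank (u : E → M) (B : Finset E) : ℕ := Module.finrank K (span K u B)

section Span

variable {u v : E → M} {A A₁ A₂ B : Finset E}

instance : FiniteDimensional K (span K u B) :=
  FiniteDimensional.span_of_finite K (B.finite_toSet.image u)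

theorem span_le {S : Submodule K M} : span K u B ≤ S ↔ ∀ e ∈ B, u e ∈ S := by
  simp [span, Submodule.span_le, Set.subset_def]

theorem span_mono (h : A ⊆ B) : span K u A ≤ span K u B :=
  Submodule.span_mono (Set.image_mono (Finset.coe_subset.2 h))

theorem mem_span {e : E} (he : e ∈ B) : u e ∈ span K u B :=
  Submodule.subset_span (Set.mem_image_of_mem u he)

theorem span_congr (h : Set.EqOn u v B) : span K u B = span K v B := by
  rw [span, span, h.image_eq]

theorem span_comp (f : M →ₗ[K] N) : span K (f ∘ u) B = (span K u B).map f := by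
  rw [span, span, Submodule.map_span, Set.image_comp]

theorem rank_congr (h : Set.EqOn u v B) : rank K u B = rank K v B := by
  rw [rank, rank, span_congr K h]

theorem rank_empty : rank K u ∅ = 0 := by
  rw [rank, span, Finset.coe_empty, Set.image_empty, Submodule.span_empty, finrank_bot]

theorem rank_le_card : rank K u B ≤ B.card := by
  classical
  rw [rank, span, ← Finset.coe_image]
  exact (finrank_span_finset_le_card _).trans Finset.card_image_le

theorem rank_eq_one {d : M} (hd : d ≠ 0) (hB : B.Nonempty)
    (h : ∀ e ∈ B, Submodule.span K {u e} = Submodule.span K {d}) : rank K u B = 1 := by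
  have hspan : span K u B = Submodule.span K {d} := by
    obtain ⟨e, he⟩ := hB
    refine le_antisymm ((span_le K).2 fun g hg => ?_) ?_
    · exact h g hg ▸ Submodule.mem_span_singleton_self _
    · rw [← h e he, Submodule.span_singleton_le_iff_mem]
      exact mem_span K he
  rw [rank, hspan, finrank_span_singleton hd]

variable [DecidableEq E]

theorem span_insert (e : E) : span K u (insert e B) = Submodule.span K {u e} ⊔ span K u B := by
  rw [span, span, Finset.coe_insert, Set.image_insert_eq, Submodule.span_insert]

theorem span_union : span K u (A₁ ∪ A₂) = span K u A₁ ⊔ span K u A₂ := by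
  rw [span, span, span, Finset.coe_union, Set.image_union, Submodule.span_union]

theorem span_insert_of_mem {e : E} (h : u e ∈ span K u B) :
    span K u (insert e B) = span K u B := by
  rw [span_insert, sup_eq_right, Submodule.span_singleton_le_iff_mem]
  exact h

theorem rank_insert_of_mem {e : E} (h : u e ∈ span K u B) :
    rank K u (insert e B) = rank K u B := by
  rw [rank, rank, span_insert_of_mem K h]

theorem rank_union_of_disjoint (h : Disjoint (span K u A₁) (span K u A₂)) :
    rank K u (A₁ ∪ A₂) = rank K u A₁ + rank K u A₂ := by
  have key := Submodule.finrank_sup_add_finrank_inf_eq (span K u A₁) (span K u A₂)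
  rwa [h.eq_bot, finrank_bot, add_zero, ← span_union] at key

theorem rank_union_add_one {d : M} (hd : d ≠ 0)
    (h : span K u A₁ ⊓ span K u A₂ = Submodule.span K {d}) :
    rank K u (A₁ ∪ A₂) + 1 = rank K u A₁ + rank K u A₂ := by
  have key := Submodule.finrank_sup_add_finrank_inf_eq (span K u A₁) (span K u A₂)
  rwa [h, finrank_span_singleton hd, ← span_union] at key

theorem rank_insert_of_notMem {e : E} (h : u e ∉ span K u B) :
    rank K u (insert e B) = rank K u B + 1 := by
  have hd : u e ≠ 0 := fun h₀ => h (h₀ ▸ zero_mem _)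
  have hs : span K u {e} = Submodule.span K {u e} := by simp [span]
  rw [← Finset.union_singleton, rank_union_of_disjoint, rank, rank, hs, finrank_span_singleton hd]
  rwa [hs, Submodule.disjoint_span_singleton' hd]

theorem rank_comp_add_one {e : E} {f : M →ₗ[K] N} (he : u e ≠ 0)
    (hf : LinearMap.ker f = Submodule.span K {u e}) :
    rank K (f ∘ u) B + 1 = rank K u (insert e B) := by
  have hspan : span K (f ∘ u) B = (span K u (insert e B)).map f := by
    rw [span_insert, Submodule.map_sup, ← hf, (LinearMap.le_ker_iff_map).1 le_rfl, bot_sup_eq,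
      span_comp]
  have hle : LinearMap.ker f ≤ span K u (insert e B) := by
    rw [hf, span_insert]
    exact le_sup_left
  have key := LinearMap.finrank_range_add_finrank_ker (f.domRestrict (span K u (insert e B)))
  rwa [LinearMap.range_domRestrict, ← hspan, LinearMap.ker_domRestrict,
    (Submodule.comapSubtypeEquivOfLe hle).finrank_eq, hf, finrank_span_singleton he] at key

/-- No member of the configuration `u` on `A` is a coloop: each vector lies in the span of the
others. For incidence vectors of a graph, the coloops are the bridges. -/
def ColoopFree (u : E → M) (A : Finset E) : Prop :=
  ∀ e ∈ A, u e ∈ span K u (A.erase e)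

end Span

variable [Field F] (q : F)

/-- The term of `B` in the subset expansion of the flow polynomial at `q`. For the vectors
attached to the edges of a graph, `rank K u B = |V| - c(B)`. -/
noncomputable def weight (u : E → M) (B : Finset E) : F := (-q) ^ B.card * q⁻¹ ^ rank K u B

/-- The flow polynomial of the vector configuration `u` restricted to `A`, evaluated at `q` and
multiplied by `(-1) ^ |A|`; this sign makes it multiplicative and free of `|A|`. -/
noncomputable def flowSum (u : E → M) (A : Finset E) : F := ∑ B ∈ A.powerset, weight K q u B

open Classical in
/-- The part of `flowSum` that comes from the index sets spanning the vector `d`. -/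
noncomputable def flowSumThrough (u : E → M) (A : Finset E) (d : M) : F :=
  ∑ B ∈ A.powerset with d ∈ span K u B, weight K q u B

/-- `flowSum` with the sign that makes it positive on `(1, 2)` for the graphs considered here. -/
noncomputable def normFlow (u : E → M) (A : Finset E) : F :=
  (-1) ^ (rank K u A + 1) * flowSum K q u A

variable {K q} {u v : E → M} {A A₁ A₂ B B₁ B₂ : Finset E} {e : E} {d d₁ d₂ : M}

theorem weight_congr (h : Set.EqOn u v B) : weight K q u B = weight K q v B := by
  rw [weight, weight, rank_congr K h]

theorem flowSumThrough_congr (h : Set.EqOn u v A) :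
    flowSumThrough K q u A d = flowSumThrough K q v A d := by
  have hB : ∀ B ∈ A.powerset, Set.EqOn u v B := fun B hB =>
    h.mono (Finset.coe_subset.2 (Finset.mem_powerset.1 hB))
  classical
  exact Finset.sum_congr (Finset.filter_congr fun B h' => by rw [span_congr K (hB B h')])
    fun B h' => weight_congr (hB B (Finset.mem_filter.1 h').1)

theorem normFlow_eq_zero : normFlow K q u A = 0 ↔ flowSum K q u A = 0 := by
  simp [normFlow]

theorem flowSum_empty : flowSum K q u ∅ = 1 := by
  simp [flowSum, weight, rank_empty]

theorem flowSumThrough_eq_zero (h : d ∉ span K u A) : flowSumThrough K q u A d = 0 := by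
  classical
  refine Finset.sum_eq_zero fun B hB => ?_
  obtain ⟨hBA, hd⟩ := Finset.mem_filter.1 hB
  exact absurd (span_mono K (Finset.mem_powerset.1 hBA) hd) h

theorem mul_flowSum_of_parallel (hq : q ≠ 0) (hd : d ≠ 0)
    (h : ∀ e ∈ A, Submodule.span K {u e} = Submodule.span K {d}) :
    q * flowSum K q u A = q - 1 + (1 - q) ^ A.card := by
  classical
  have hweight : ∀ B ∈ A.powerset, q * weight K q u B =
      (-q) ^ B.card * 1 ^ (A.card - B.card) + if B = ∅ then q - 1 else 0 := by
    intro B hB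
    rcases B.eq_empty_or_nonempty with rfl | hne
    · simp [weight, rank_empty]
    · rw [weight, rank_eq_one K hd hne fun e he => h e (Finset.mem_powerset.1 hB he),
        if_neg hne.ne_empty]
      field_simp
      ring
  rw [flowSum, Finset.mul_sum, Finset.sum_congr rfl hweight, Finset.sum_add_distrib,
    Finset.sum_pow_mul_eq_add_pow, Finset.sum_ite_eq' _ _ fun _ => q - 1,
    if_pos (Finset.empty_mem_powerset A)]
  ring

theorem normFlow_pos_of_parallel {q : ℝ} (hq₁ : 1 < q) (hq₂ : q < 2) (hd : d ≠ 0)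
    (hA : 2 ≤ A.card) (h : ∀ e ∈ A, Submodule.span K {u e} = Submodule.span K {d}) :
    0 < normFlow K q u A := by
  have hne : A.Nonempty := Finset.card_pos.1 (by omega)
  have hsum := mul_flowSum_of_parallel (by positivity : q ≠ 0) hd h
  have habs : |(1 - q) ^ A.card| ≤ (q - 1) ^ 2 := by
    rw [abs_pow, abs_sub_comm, abs_of_pos (sub_pos.2 hq₁)]
    exact pow_le_pow_of_le_one (by linarith) (by linarith) hA
  have hpos : 0 < q * flowSum K q u A := by
    rw [hsum]
    nlinarith [neg_abs_le ((1 - q) ^ A.card)]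
  rw [normFlow, rank_eq_one K hd hne h]
  simpa using pos_of_mul_pos_right hpos (by linarith)

variable [DecidableEq E]

theorem weight_insert_of_mem (he : e ∉ B) (h : u e ∈ span K u B) :
    weight K q u (insert e B) = -q * weight K q u B := by
  rw [weight, weight, rank_insert_of_mem K h, Finset.card_insert_of_notMem he]
  ring

theorem weight_insert_of_notMem (hq : q ≠ 0) (he : e ∉ B) (h : u e ∉ span K u B) :
    weight K q u (insert e B) = -weight K q u B := by
  rw [weight, weight, rank_insert_of_notMem K h, Finset.card_insert_of_notMem he,
    pow_succ, pow_succ]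
  field_simp

theorem weight_union_of_disjoint (hB : Disjoint B₁ B₂)
    (h : Disjoint (span K u B₁) (span K u B₂)) :
    weight K q u (B₁ ∪ B₂) = weight K q u B₁ * weight K q u B₂ := by
  rw [weight, weight, weight, Finset.card_union_of_disjoint hB, rank_union_of_disjoint K h]
  ring

theorem weight_union_of_inf_eq_span (hq : q ≠ 0) (hB : Disjoint B₁ B₂) (hd : d ≠ 0)
    (h : span K u B₁ ⊓ span K u B₂ = Submodule.span K {d}) :
    weight K q u (B₁ ∪ B₂) = q * (weight K q u B₁ * weight K q u B₂) := by
  have hrank : q⁻¹ ^ rank K u (B₁ ∪ B₂) = q * q⁻¹ ^ (rank K u B₁ + rank K u B₂) := by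
    rw [← rank_union_add_one K hd h, pow_succ]
    field_simp
  rw [weight, weight, weight, Finset.card_union_of_disjoint hB, hrank]
  ring

theorem flowSum_insert (hq : q ≠ 0) (he : e ∉ A) :
    flowSum K q u (insert e A) = (1 - q) * flowSumThrough K q u A (u e) := by
  classical
  rw [flowSum, flowSumThrough, Finset.sum_powerset_insert he, ← Finset.sum_add_distrib,
    Finset.sum_filter, Finset.mul_sum]
  refine Finset.sum_congr rfl fun B hB => ?_
  have heB : e ∉ B := fun h => he (Finset.mem_powerset.1 hB h)
  split_ifs with h
  · rw [weight_insert_of_mem heB h]; ring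
  · rw [weight_insert_of_notMem hq heB h]; ring

theorem flowSumThrough_insert_self (hq : q ≠ 0) (he : e ∉ A) :
    flowSumThrough K q u (insert e A) (u e) =
      (2 - q) * flowSumThrough K q u A (u e) - flowSum K q u A := by
  classical
  simp only [flowSum, flowSumThrough, Finset.sum_filter]
  rw [Finset.sum_powerset_insert he, ← Finset.sum_add_distrib, Finset.mul_sum,
    ← Finset.sum_sub_distrib]
  refine Finset.sum_congr rfl fun B hB => ?_
  have heB : e ∉ B := fun h => he (Finset.mem_powerset.1 hB h)
  rw [if_pos (mem_span K (Finset.mem_insert_self e B))]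
  split_ifs with h
  · rw [weight_insert_of_mem heB h]; ring
  · rw [weight_insert_of_notMem hq heB h]; ring

theorem flowSum_insert_of_eq_zero (hq : q ≠ 0) (he : e ∉ A) (h : u e = 0) :
    flowSum K q u (insert e A) = (1 - q) * flowSum K q u A := by
  classical
  rw [flowSum_insert hq he, flowSumThrough, flowSum, h]
  simp only [zero_mem, Finset.filter_true]

theorem flowSum_union_of_eq_zero (hq : q ≠ 0) (hAB : Disjoint B A) (h₀ : ∀ e ∈ B, u e = 0) :
    flowSum K q u (B ∪ A) = (1 - q) ^ B.card * flowSum K q u A := by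
  induction B using Finset.induction_on with
  | empty => simp
  | insert e B he ih =>
    rw [Finset.disjoint_insert_left] at hAB
    rw [Finset.insert_union, flowSum_insert_of_eq_zero hq (by simp [he, hAB.1])
      (h₀ e (Finset.mem_insert_self e B)),
      ih hAB.2 fun f hf => h₀ f (Finset.mem_insert_of_mem hf), Finset.card_insert_of_notMem he]
    ring

theorem flowSum_eq_zero_of_notMem_span (hq : q ≠ 0) (he : e ∈ A)
    (h : u e ∉ span K u (A.erase e)) : flowSum K q u A = 0 := by
  rw [← Finset.insert_erase he, flowSum_insert hq (Finset.notMem_erase e A),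
    flowSumThrough_eq_zero h, mul_zero]

theorem flowSum_union_of_disjoint (hA : Disjoint A₁ A₂)
    (h : Disjoint (span K u A₁) (span K u A₂)) :
    flowSum K q u (A₁ ∪ A₂) = flowSum K q u A₁ * flowSum K q u A₂ := by
  rw [flowSum, sum_powerset_union_of_disjoint hA, flowSum, flowSum, Finset.sum_mul_sum]
  refine Finset.sum_congr rfl fun B₁ hB₁ => Finset.sum_congr rfl fun B₂ hB₂ => ?_
  rw [Finset.mem_powerset] at hB₁ hB₂
  exact weight_union_of_disjoint (hA.mono hB₁ hB₂)
    (h.mono (span_mono K hB₁) (span_mono K hB₂))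

theorem flowSum_union_of_inf_le_span (hq : q ≠ 0) (hA : Disjoint A₁ A₂) (hd : d ≠ 0)
    (h : span K u A₁ ⊓ span K u A₂ ≤ Submodule.span K {d}) :
    flowSum K q u (A₁ ∪ A₂) = flowSum K q u A₁ * flowSum K q u A₂ +
      (q - 1) * (flowSumThrough K q u A₁ d * flowSumThrough K q u A₂ d) := by
  classical
  simp only [flowSum, flowSumThrough, Finset.sum_filter]
  rw [sum_powerset_union_of_disjoint hA, Finset.sum_mul_sum, Finset.sum_mul_sum, Finset.mul_sum,
    ← Finset.sum_add_distrib]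
  refine Finset.sum_congr rfl fun B₁ hB₁ => ?_
  rw [Finset.mul_sum, ← Finset.sum_add_distrib]
  refine Finset.sum_congr rfl fun B₂ hB₂ => ?_
  rw [Finset.mem_powerset] at hB₁ hB₂
  have hB : Disjoint B₁ B₂ := hA.mono hB₁ hB₂
  have hle := (inf_le_inf (span_mono K hB₁) (span_mono K hB₂)).trans h
  by_cases hmem : d ∈ span K u B₁ ∧ d ∈ span K u B₂
  · have hinf : span K u B₁ ⊓ span K u B₂ = Submodule.span K {d} :=
      hle.antisymm (by simpa using hmem)
    rw [weight_union_of_inf_eq_span hq hB hd hinf, if_pos hmem.1, if_pos hmem.2]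
    ring
  · have hdisj : Disjoint (span K u B₁) (span K u B₂) := by
      refine disjoint_iff.2 (((nonzero_span_atom d hd).le_iff.1 hle).resolve_right fun hinf => ?_)
      exact hmem (Submodule.mem_inf.1 (hinf ▸ Submodule.mem_span_singleton_self d))
    rw [weight_union_of_disjoint hB hdisj]
    split_ifs <;> simp_all

theorem flowSumThrough_union (hA : Disjoint A₁ A₂) (h : Disjoint (span K u A₁) (span K u A₂))
    (hd₁ : d₁ ∈ span K u A₁) (hd₂ : d₂ ∈ span K u A₂) :
    flowSumThrough K q u (A₁ ∪ A₂) (d₁ + d₂) =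
      flowSumThrough K q u A₁ d₁ * flowSumThrough K q u A₂ d₂ := by
  classical
  simp only [flowSumThrough, Finset.sum_filter]
  rw [sum_powerset_union_of_disjoint hA, Finset.sum_mul_sum]
  refine Finset.sum_congr rfl fun B₁ hB₁ => Finset.sum_congr rfl fun B₂ hB₂ => ?_
  rw [Finset.mem_powerset] at hB₁ hB₂
  have hspan₁ := span_mono K (u := u) hB₁
  have hspan₂ := span_mono K (u := u) hB₂
  rw [weight_union_of_disjoint (hA.mono hB₁ hB₂) (h.mono hspan₁ hspan₂), span_union]
  simp only [add_mem_sup_iff_of_disjoint h hspan₁ hspan₂ hd₁ hd₂, ite_zero_mul_ite_zero]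

theorem mem_span_erase_of_normFlow_ne_zero (hq : q ≠ 0) (he : e ∈ A)
    (h : normFlow K q u A ≠ 0) : u e ∈ span K u (A.erase e) := by
  by_contra hmem
  exact h (normFlow_eq_zero.2 (flowSum_eq_zero_of_notMem_span hq he hmem))

theorem flowSum_insert_eq_sub (hq : q ≠ 0) (he : e ∉ A) {f : M →ₗ[K] N} (hd : u e ≠ 0)
    (hf : LinearMap.ker f = Submodule.span K {u e}) :
    flowSum K q u (insert e A) = flowSum K q u A - flowSum K q (f ∘ u) A := by
  rw [flowSum, Finset.sum_powerset_insert he, sub_eq_add_neg, flowSum, flowSum,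
    ← Finset.sum_neg_distrib]
  congr 1
  refine Finset.sum_congr rfl fun B hB => ?_
  have heB : e ∉ B := fun h => he (Finset.mem_powerset.1 hB h)
  rw [weight, weight, ← rank_comp_add_one K hd hf, Finset.card_insert_of_notMem heB, pow_succ,
    pow_succ]
  field_simp

theorem normFlow_insert (hq : q ≠ 0) (he : e ∉ A) {f : M →ₗ[K] N} (hd : u e ≠ 0)
    (hmem : u e ∈ span K u A) (hf : LinearMap.ker f = Submodule.span K {u e}) :
    normFlow K q u (insert e A) = normFlow K q u A + normFlow K q (f ∘ u) A := by
  have hrank : rank K (f ∘ u) A + 1 = rank K u A := by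
    rw [rank_comp_add_one K hd hf, rank_insert_of_mem K hmem]
  rw [normFlow, normFlow, normFlow, rank_insert_of_mem K hmem, flowSum_insert_eq_sub hq he hd hf,
    ← hrank]
  ring

theorem normFlow_insert_union_of_inf_le_span (hq : q ≠ 0) (hq₁ : q ≠ 1) (he₁ : e ∉ A₁)
    (he₂ : e ∉ A₂) (hA : Disjoint A₁ A₂) (hd : u e ≠ 0) (hd₁ : u e ∈ span K u A₁)
    (hd₂ : u e ∈ span K u A₂) (h : span K u A₁ ⊓ span K u A₂ ≤ Submodule.span K {u e}) :
    normFlow K q u (insert e (A₁ ∪ A₂)) =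
      normFlow K q u (insert e A₁) * normFlow K q u A₂ +
        normFlow K q u A₁ * normFlow K q u (insert e A₂) +
        (2 - q) / (q - 1) * (normFlow K q u (insert e A₁) * normFlow K q u (insert e A₂)) := by
  have hmem : u e ∈ span K u (A₁ ∪ A₂) := span_mono K Finset.subset_union_left hd₁
  have hrank : rank K u (A₁ ∪ A₂) + 1 = rank K u A₁ + rank K u A₂ :=
    rank_union_add_one K hd (h.antisymm (by simpa using ⟨hd₁, hd₂⟩))
  have hsum : flowSum K q u (insert e (A₁ ∪ A₂)) =
      flowSum K q u (insert e A₁) * flowSum K q u A₂ +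
        (q - 1) * (flowSumThrough K q u (insert e A₁) (u e) * flowSumThrough K q u A₂ (u e)) := by
    rw [← Finset.insert_union]
    refine flowSum_union_of_inf_le_span hq (Finset.disjoint_insert_left.2 ⟨he₂, hA⟩) hd ?_
    rwa [span_insert_of_mem K hd₁]
  have hq₁' : q - 1 ≠ 0 := sub_ne_zero.2 hq₁
  simp only [normFlow, rank_insert_of_mem K hmem, rank_insert_of_mem K hd₁,
    rank_insert_of_mem K hd₂, hrank, hsum, flowSumThrough_insert_self hq he₁,
    flowSum_insert hq he₁, flowSum_insert hq he₂]
  field_simp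
  ring

theorem normFlow_insert_union_of_disjoint (hq : q ≠ 0) (hq₁ : q ≠ 1) (he₁ : e ∉ A₁)
    (he₂ : e ∉ A₂) (hA : Disjoint A₁ A₂) (h : Disjoint (span K u A₁) (span K u A₂))
    {u₁ u₂ : E → M} (hu₁ : Set.EqOn u₁ u A₁) (hu₂ : Set.EqOn u₂ u A₂) (hu : u₁ e + u₂ e = u e)
    (hd₁ : u₁ e ∈ span K u A₁) (hd₂ : u₂ e ∈ span K u A₂) :
    normFlow K q u (insert e (A₁ ∪ A₂)) =
      (q - 1)⁻¹ * (normFlow K q u₁ (insert e A₁) * normFlow K q u₂ (insert e A₂)) := by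
  have hmem : u e ∈ span K u (A₁ ∪ A₂) := by
    rw [← hu, span_union]
    exact Submodule.add_mem_sup hd₁ hd₂
  have hq₁' : q - 1 ≠ 0 := sub_ne_zero.2 hq₁
  rw [← span_congr K hu₁] at hd₁
  rw [← span_congr K hu₂] at hd₂
  simp only [normFlow, rank_insert_of_mem K hmem, rank_insert_of_mem K hd₁,
    rank_insert_of_mem K hd₂, rank_union_of_disjoint K h, rank_congr K hu₁, rank_congr K hu₂,
    flowSum_insert hq he₁, flowSum_insert hq he₂]
  rw [flowSum_insert hq (by simp [he₁, he₂]), ← hu,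
    flowSumThrough_union hA h (span_congr K hu₁ ▸ hd₁) (span_congr K hu₂ ▸ hd₂),
    flowSumThrough_congr hu₁, flowSumThrough_congr hu₂]
  field_simp
  ring

theorem ColoopFree.left (h : ColoopFree K u (A₁ ∪ A₂)) (hA : Disjoint A₁ A₂)
    (hspan : Disjoint (span K u A₁) (span K u A₂)) : ColoopFree K u A₁ := by
  intro e he
  have hmem : u e + 0 ∈ span K u (A₁.erase e) ⊔ span K u A₂ := by
    rw [add_zero, ← span_union,
      ← Finset.erase_eq_of_notMem (Finset.disjoint_left.1 hA he), ← Finset.erase_union_distrib]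
    exact h e (Finset.mem_union_left _ he)
  exact ((add_mem_sup_iff_of_disjoint hspan (span_mono K (Finset.erase_subset e A₁)) le_rfl
    (mem_span K he) (zero_mem _)).1 hmem).1

theorem ColoopFree.of_subset (h : ColoopFree K u B) (hAB : A ⊆ B)
    (h₀ : ∀ e ∈ B, e ∉ A → u e = 0) : ColoopFree K u A := by
  intro e he
  have hle : span K u (B.erase e) ≤ span K u (A.erase e) := by
    refine (span_le K).2 fun f hf => ?_
    obtain ⟨hfe, hfB⟩ := Finset.mem_erase.1 hf
    by_cases hfA : f ∈ A
    · exact mem_span K (Finset.mem_erase.2 ⟨hfe, hfA⟩)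
    · exact h₀ f hfB hfA ▸ zero_mem _
  exact hle (h e (hAB he))

end VectorConfiguration

namespace Multigraph

open VectorConfiguration

variable {V E : Type}

/-! ### Incidence vectors and supports -/

section Incidence

open Classical in
/-- The difference of the unit vectors at `a` and at `b`. -/
noncomputable def diffVec (a b : V) : V → ℚ :=
  Pi.single a 1 - Pi.single b 1

/-- The incidence vectors of the edges, each edge being oriented from `fst` to `snd`. The rank of
this vector configuration on a set of edges is the rank of that set in the cycle matroid. -/
noncomputable def incVec (G : Multigraph V E) (e : E) : V → ℚ :=
  diffVec (G.fst e) (G.snd e)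

/-- The edge `e` has end vertices `a` and `b`, in either order. -/
def IsLink (G : Multigraph V E) (e : E) (a b : V) : Prop :=
  (G.fst e = a ∧ G.snd e = b) ∨ (G.fst e = b ∧ G.snd e = a)

/-- The set of vertices incident with some edge in `A`. -/
def support (G : Multigraph V E) (A : Finset E) : Set V :=
  {v | ∃ e ∈ A, ∃ w, G.IsLink e v w}

/-- None of the edges in `A` is a loop. -/
def LooplessOn (G : Multigraph V E) (A : Finset E) : Prop :=
  ∀ e ∈ A, G.fst e ≠ G.snd e

variable {G : Multigraph V E} {A A₁ A₂ : Finset E} {e : E} {a b u v w : V}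

theorem diffVec_self (a : V) : diffVec a a = 0 :=
  sub_self _

theorem diffVec_add (a b c : V) : diffVec a b + diffVec b c = diffVec a c :=
  sub_add_sub_cancel _ _ _

theorem neg_diffVec (a b : V) : -diffVec a b = diffVec b a :=
  neg_sub _ _

theorem diffVec_apply_left (h : a ≠ b) : diffVec a b a = 1 := by
  simp [diffVec, h]

theorem diffVec_apply_right (h : a ≠ b) : diffVec a b b = -1 := by
  simp [diffVec, h.symm]

theorem diffVec_apply_of_ne (ha : v ≠ a) (hb : v ≠ b) : diffVec a b v = 0 := by
  simp [diffVec, ha, hb]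

theorem diffVec_ne_zero (h : a ≠ b) : diffVec a b ≠ 0 := fun h₀ => by
  simpa [h₀] using diffVec_apply_left h

theorem sum_diffVec [Fintype V] (a b : V) : ∑ v, diffVec a b v = 0 := by
  simp [diffVec]

theorem isLink_fst_snd (G : Multigraph V E) (e : E) : G.IsLink e (G.fst e) (G.snd e) :=
  Or.inl ⟨rfl, rfl⟩

theorem IsLink.symm (h : G.IsLink e a b) : G.IsLink e b a :=
  Or.symm h

theorem IsLink.eq_or_eq (h : G.IsLink e a b) (h' : G.IsLink e u w) : u = a ∨ u = b := by
  grind [IsLink]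

theorem IsLink.ne (h : G.IsLink e a b) (he : G.fst e ≠ G.snd e) : a ≠ b := by
  grind [IsLink]

theorem IsLink.of_ne (hu : G.IsLink e u a) (hv : G.IsLink e v b) (huv : u ≠ v) :
    G.IsLink e u v := by
  grind [IsLink]

theorem IsLink.mem_support (h : G.IsLink e a b) (he : e ∈ A) : a ∈ G.support A :=
  ⟨e, he, b, h⟩

theorem IsLink.incVec_eq_or_eq (h : G.IsLink e a b) :
    G.incVec e = diffVec a b ∨ G.incVec e = diffVec b a := by
  rcases h with ⟨ha, hb⟩ | ⟨hb, ha⟩ <;> simp [incVec, ha, hb]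

theorem IsLink.span_incVec (h : G.IsLink e a b) :
    Submodule.span ℚ {G.incVec e} = Submodule.span ℚ {diffVec a b} := by
  rcases h.incVec_eq_or_eq with h | h <;> rw [h]
  rw [← neg_diffVec, ← Set.neg_singleton, Submodule.span_neg]

theorem IsLink.incVec_mem (h : G.IsLink e a b) {S : Submodule ℚ (V → ℚ)} :
    G.incVec e ∈ S ↔ diffVec a b ∈ S := by
  rw [← Submodule.span_singleton_le_iff_mem, h.span_incVec, Submodule.span_singleton_le_iff_mem]

theorem IsLink.incVec_apply_ne_zero (h : G.IsLink e a b) (hab : a ≠ b) : G.incVec e a ≠ 0 := by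
  rcases h.incVec_eq_or_eq with h | h <;> rw [h]
  · simp [diffVec_apply_left hab]
  · simp [diffVec_apply_right hab.symm]

theorem IsLink.incVec_ne_zero (h : G.IsLink e a b) (hab : a ≠ b) : G.incVec e ≠ 0 := fun h₀ =>
  h.incVec_apply_ne_zero hab (congrFun h₀ a)

theorem support_singleton (h : G.IsLink e a b) : G.support {e} = {a, b} := by
  ext v
  simp only [support, Finset.mem_singleton, exists_eq_left, Set.mem_ofPred_eq, Set.mem_insert_iff,
    Set.mem_singleton_iff]
  exact ⟨fun ⟨_, hv⟩ => h.eq_or_eq hv, by rintro (rfl | rfl); exacts [⟨_, h⟩, ⟨_, h.symm⟩]⟩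

theorem support_mono (G : Multigraph V E) (h : A₁ ⊆ A₂) : G.support A₁ ⊆ G.support A₂ :=
  fun _ ⟨e, he, hv⟩ => ⟨e, h he, hv⟩

theorem support_union [DecidableEq E] (G : Multigraph V E) (A₁ A₂ : Finset E) :
    G.support (A₁ ∪ A₂) = G.support A₁ ∪ G.support A₂ := by
  ext v
  simp only [support, Finset.mem_union, Set.mem_union, Set.mem_ofPred_eq]
  grind

theorem IsLink.support_insert [DecidableEq E] (h : G.IsLink e a b) (A : Finset E) :
    G.support (insert e A) = {a, b} ∪ G.support A := by
  rw [Finset.insert_eq, support_union, support_singleton h]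

theorem eq_zero_of_mem_span {y : V → ℚ} (hy : y ∈ span ℚ G.incVec A) (hv : v ∉ G.support A) :
    y v = 0 := by
  have h : span ℚ G.incVec A ≤ LinearMap.ker (LinearMap.proj (R := ℚ) (φ := fun _ : V => ℚ) v) :=
    (span_le ℚ).2 fun e he => diffVec_apply_of_ne
      (fun h => hv ⟨e, he, _, Or.inl ⟨h.symm, rfl⟩⟩) fun h => hv ⟨e, he, _, Or.inr ⟨rfl, h.symm⟩⟩
  exact h hy

theorem sum_eq_zero_of_mem_span [Fintype V] {y : V → ℚ} (hy : y ∈ span ℚ G.incVec A) :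
    ∑ v, y v = 0 := by
  have h : span ℚ G.incVec A ≤
      LinearMap.ker (∑ v : V, LinearMap.proj (R := ℚ) (φ := fun _ : V => ℚ) v) :=
    (span_le ℚ).2 fun e _ => by simpa using! sum_diffVec (G.fst e) (G.snd e)
  simpa using h hy

theorem mem_span_diffVec [Fintype V] {y : V → ℚ} (hsum : ∑ v, y v = 0)
    (hy : ∀ v, v ≠ a → v ≠ b → y v = 0) : y ∈ Submodule.span ℚ {diffVec a b} := by
  classical
  refine Submodule.mem_span_singleton.2 ⟨y a, ?_⟩
  rcases eq_or_ne a b with rfl | hab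
  · have hya : y a = 0 := by
      rwa [Fintype.sum_eq_single a fun v hv => hy v hv hv] at hsum
    ext v
    rcases eq_or_ne v a with rfl | hv
    · simp [hya]
    · simp [hya, hy v hv hv]
  · rw [Fintype.sum_eq_add a b hab fun v hv => hy v hv.1 hv.2] at hsum
    ext v
    rcases eq_or_ne v a with rfl | hva
    · simp [diffVec_apply_left hab]
    rcases eq_or_ne v b with rfl | hvb
    · simp only [Pi.smul_apply, diffVec_apply_right hab, smul_eq_mul]
      linarith
    · simp [diffVec_apply_of_ne hva hvb, hy v hva hvb]

theorem span_inf_span_le_span_diffVec [Finite V] (h : G.support A₁ ∩ G.support A₂ ⊆ {a, b}) :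
    span ℚ G.incVec A₁ ⊓ span ℚ G.incVec A₂ ≤ Submodule.span ℚ {diffVec a b} := by
  cases nonempty_fintype V
  rintro y ⟨h₁, h₂⟩
  refine mem_span_diffVec (sum_eq_zero_of_mem_span h₁) fun v hva hvb => ?_
  by_cases hv : v ∈ G.support A₁
  · exact eq_zero_of_mem_span h₂ fun hv' => (h ⟨hv, hv'⟩).elim hva hvb
  · exact eq_zero_of_mem_span h₁ hv

theorem disjoint_span [Finite V] (h : (G.support A₁ ∩ G.support A₂).Subsingleton) :
    Disjoint (span ℚ G.incVec A₁) (span ℚ G.incVec A₂) := by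
  rcases isEmpty_or_nonempty V with _ | _
  · exact (Submodule.eq_bot_of_subsingleton (p := span ℚ G.incVec A₁)).symm ▸ disjoint_bot_left
  obtain ⟨x, hx⟩ : ∃ x, G.support A₁ ∩ G.support A₂ ⊆ {x, x} := by
    rcases h.eq_empty_or_singleton with h | ⟨x, h⟩
    · exact ⟨Classical.arbitrary V, by simp [h]⟩
    · exact ⟨x, by simp [h]⟩
  have h₀ := span_inf_span_le_span_diffVec hx
  rw [diffVec_self, Submodule.span_zero_singleton] at h₀
  exact disjoint_iff_inf_le.2 h₀

end Incidence

/-! ### Degrees -/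

section Degree

open Classical in
/-- The degree of `v` in the spanning subgraph with edge set `A`; a loop contributes `2`. -/
noncomputable def degreeOn (G : Multigraph V E) (A : Finset E) (v : V) : ℕ :=
  ∑ e ∈ A, ((if G.fst e = v then 1 else 0) + if G.snd e = v then 1 else 0)

variable {G : Multigraph V E} {A A₁ A₂ : Finset E} {e : E} {a b v : V}

theorem degreeOn_mono (h : A₁ ⊆ A₂) (v : V) : G.degreeOn A₁ v ≤ G.degreeOn A₂ v :=
  Finset.sum_le_sum_of_subset h

theorem degreeOn_union [DecidableEq E] (h : Disjoint A₁ A₂) (v : V) :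
    G.degreeOn (A₁ ∪ A₂) v = G.degreeOn A₁ v + G.degreeOn A₂ v :=
  Finset.sum_union h

theorem IsLink.degreeOn_insert [DecidableEq V] [DecidableEq E] (h : G.IsLink e a b) (he : e ∉ A)
    (v : V) : G.degreeOn (insert e A) v =
      (if a = v then 1 else 0) + (if b = v then 1 else 0) + G.degreeOn A v := by
  rw [degreeOn, Finset.sum_insert he, degreeOn]
  rcases h with ⟨rfl, rfl⟩ | ⟨rfl, rfl⟩ <;> grind

theorem degreeOn_eq_zero_iff : G.degreeOn A v = 0 ↔ v ∉ G.support A := by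
  simp only [degreeOn, Finset.sum_eq_zero_iff, support, IsLink, Set.mem_ofPred_eq]
  grind

theorem mem_support_of_degreeOn_pos (h : 0 < G.degreeOn A v) : v ∈ G.support A :=
  not_not.1 (mt degreeOn_eq_zero_iff.2 h.ne')

theorem degreeOn_pos (h : v ∈ G.support A) : 0 < G.degreeOn A v :=
  Nat.pos_of_ne_zero fun h₀ => degreeOn_eq_zero_iff.1 h₀ h

end Degree

/-! ### Moving end vertices -/

section MoveEnds

/-- The edges in `A` have the same end vertices, in the same order, in `G` and in `H`. -/
def EndsEqOn (G H : Multigraph V E) (A : Finset E) : Prop :=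
  Set.EqOn G.fst H.fst A ∧ Set.EqOn G.snd H.snd A

open Classical in
/-- The multigraph obtained from `G` by identifying `b` with `a`. The vertex `b` stays, isolated, so
that the vertex type does not change. -/
noncomputable def identify (G : Multigraph V E) (a b : V) : Multigraph V E where
  fst e := if G.fst e = b then a else G.fst e
  snd e := if G.snd e = b then a else G.snd e

/-- The linear map sending the unit vector at `b` to the one at `a` and fixing the others. -/
noncomputable def identifyMap (a b : V) : (V → ℚ) →ₗ[ℚ] (V → ℚ) :=
  LinearMap.id + (LinearMap.proj b).smulRight (diffVec a b)

open Classical in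
/-- The multigraph obtained from `G` by moving the ends of `e` at the vertex `v` to the
vertex `x`. -/
noncomputable def reattach (G : Multigraph V E) (e : E) (v x : V) : Multigraph V E where
  fst := Function.update G.fst e (if G.fst e = v then x else G.fst e)
  snd := Function.update G.snd e (if G.snd e = v then x else G.snd e)

variable {G H : Multigraph V E} {A B : Finset E} {e : E} {a b u v w x : V}

theorem EndsEqOn.refl (G : Multigraph V E) (A : Finset E) : G.EndsEqOn G A :=
  ⟨Set.eqOn_refl _ _, Set.eqOn_refl _ _⟩

theorem EndsEqOn.mono (h : G.EndsEqOn H A) (hB : B ⊆ A) : G.EndsEqOn H B :=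
  ⟨h.1.mono hB, h.2.mono hB⟩

theorem EndsEqOn.isLink_iff (h : G.EndsEqOn H A) (he : e ∈ A) :
    H.IsLink e a b ↔ G.IsLink e a b := by
  rw [IsLink, IsLink, h.1 he, h.2 he]

theorem EndsEqOn.support_eq (h : G.EndsEqOn H A) : H.support A = G.support A := by
  ext v
  exact exists_congr fun e => and_congr_right fun he => exists_congr fun w => h.isLink_iff he

theorem EndsEqOn.degreeOn_eq (h : G.EndsEqOn H A) (v : V) : H.degreeOn A v = G.degreeOn A v :=
  Finset.sum_congr rfl fun e he => by rw [h.1 he, h.2 he]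

theorem EndsEqOn.eqOn_incVec (h : G.EndsEqOn H A) : Set.EqOn H.incVec G.incVec A :=
  fun e he => by rw [incVec, incVec, h.1 he, h.2 he]

open Classical in
theorem identifyMap_single (a b v : V) :
    identifyMap a b (Pi.single v 1) = Pi.single (if v = b then a else v) 1 := by
  rcases eq_or_ne v b with rfl | h
  · simp [identifyMap, diffVec]
  · simp [identifyMap, h]

theorem identifyMap_comp_incVec (G : Multigraph V E) (a b : V) :
    identifyMap a b ∘ G.incVec = (G.identify a b).incVec := by
  ext e : 1
  simp only [Function.comp_apply, incVec, diffVec, map_sub]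
  rw [identifyMap_single, identifyMap_single]
  rfl

theorem ker_identifyMap (hab : a ≠ b) :
    LinearMap.ker (identifyMap a b) = Submodule.span ℚ {diffVec a b} := by
  apply le_antisymm
  · intro y hy
    refine Submodule.mem_span_singleton.2 ⟨-y b, ?_⟩
    rw [neg_smul, neg_eq_iff_add_eq_zero, add_comm]
    exact hy
  · rw [Submodule.span_singleton_le_iff_mem, LinearMap.mem_ker]
    simp [identifyMap, diffVec_apply_right hab]

open Classical in
theorem IsLink.identify (h : G.IsLink e u w) :
    (G.identify a b).IsLink e (if u = b then a else u) (if w = b then a else w) := by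
  grind [IsLink, Multigraph.identify]

theorem IsLink.identify_of_ne (h : G.IsLink e u w) (hu : u ≠ b) (hw : w ≠ b) :
    (G.identify a b).IsLink e u w := by
  simpa only [hu, hw, if_false] using h.identify (a := a) (b := b)

open Classical in
theorem ite_mem_support_identify (h : v ∈ G.support A) :
    (if v = b then a else v) ∈ (G.identify a b).support A := by
  obtain ⟨e, he, w, hl⟩ := h
  exact hl.identify.mem_support he

theorem degreeOn_identify (ha : v ≠ a) (hb : v ≠ b) :
    (G.identify a b).degreeOn A v = G.degreeOn A v :=
  Finset.sum_congr rfl fun e _ => by grind [Multigraph.identify]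

theorem degreeOn_identify_right (hab : a ≠ b) : (G.identify a b).degreeOn A b = 0 :=
  Finset.sum_eq_zero fun e _ => by grind [Multigraph.identify]

theorem endsEqOn_reattach (he : e ∉ A) : G.EndsEqOn (G.reattach e v x) A := by
  constructor <;> intro g hg <;> have hge : g ≠ e := ne_of_mem_of_not_mem hg he <;>
    simp [reattach, hge]

theorem IsLink.reattach (h : G.IsLink e a b) (hab : a ≠ b) : (G.reattach e b x).IsLink e a x := by
  rcases h with ⟨rfl, rfl⟩ | ⟨rfl, rfl⟩ <;> simp [IsLink, Multigraph.reattach, hab]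

theorem IsLink.incVec_reattach_add (h : G.IsLink e a b) (hab : a ≠ b) :
    (G.reattach e b x).incVec e + (G.reattach e a x).incVec e = G.incVec e := by
  rcases h with ⟨rfl, rfl⟩ | ⟨rfl, rfl⟩
  · simp [incVec, Multigraph.reattach, hab, hab.symm, diffVec_add]
  · rw [add_comm]
    simp [incVec, Multigraph.reattach, hab, hab.symm, diffVec_add]

end MoveEnds

/-! ### Separations -/

section Separation

/-- A `1`-separation: two disjoint nonempty sets of edges with at most one common vertex. -/
structure IsSeparation (G : Multigraph V E) (A₁ A₂ : Finset E) : Prop where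
  disjoint : Disjoint A₁ A₂
  left_nonempty : A₁.Nonempty
  right_nonempty : A₂.Nonempty
  subsingleton : (G.support A₁ ∩ G.support A₂).Subsingleton

/-- The subgraph formed by the edges in `A` and their end vertices has no `1`-separation. -/
def NonSeparableOn [DecidableEq E] (G : Multigraph V E) (A : Finset E) : Prop :=
  ∀ A₁ A₂, G.IsSeparation A₁ A₂ → A₁ ∪ A₂ ≠ A

/-- `A₁` and `A₂` share exactly the vertex `x`, which separates the vertex `a` of `A₁` from the
vertex `b` of `A₂`. -/
structure SeparatesAt (G : Multigraph V E) (x a b : V) (A₁ A₂ : Finset E) : Prop where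
  disjoint : Disjoint A₁ A₂
  support_inter : G.support A₁ ∩ G.support A₂ = {x}
  left_mem : a ∈ G.support A₁
  right_mem : b ∈ G.support A₂
  left_ne : a ≠ x
  right_ne : b ≠ x

variable {G H : Multigraph V E} {A B A₁ A₂ : Finset E} {e : E} {a b x : V}

theorem IsSeparation.symm (h : G.IsSeparation A₁ A₂) : G.IsSeparation A₂ A₁ :=
  ⟨h.disjoint.symm, h.right_nonempty, h.left_nonempty, Set.inter_comm _ _ ▸ h.subsingleton⟩

theorem SeparatesAt.symm (h : G.SeparatesAt x a b A₁ A₂) : G.SeparatesAt x b a A₂ A₁ :=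
  ⟨h.disjoint.symm, Set.inter_comm _ _ ▸ h.support_inter, h.right_mem, h.left_mem, h.right_ne,
    h.left_ne⟩

theorem SeparatesAt.subsingleton (h : G.SeparatesAt x a b A₁ A₂) :
    (G.support A₁ ∩ G.support A₂).Subsingleton :=
  h.support_inter ▸ Set.subsingleton_singleton

theorem SeparatesAt.mem_left (h : G.SeparatesAt x a b A₁ A₂) : x ∈ G.support A₁ :=
  (h.support_inter.symm.subset rfl).1

theorem SeparatesAt.left_notMem (h : G.SeparatesAt x a b A₁ A₂) : a ∉ G.support A₂ := fun ha =>
  h.left_ne (h.support_inter.subset ⟨h.left_mem, ha⟩)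

theorem SeparatesAt.left_nonempty (h : G.SeparatesAt x a b A₁ A₂) : A₁.Nonempty :=
  let ⟨e, he, _⟩ := h.left_mem
  ⟨e, he⟩

variable [DecidableEq E]

theorem NonSeparableOn.not_subsingleton (h : G.NonSeparableOn A) (hBA : B ⊆ A) (hB : B.Nonempty)
    (hne : B ≠ A) : ¬ (G.support B ∩ G.support (A \ B)).Subsingleton := fun hs =>
  h B (A \ B) ⟨Finset.disjoint_sdiff, hB, Finset.sdiff_nonempty.2 fun h => hne (hBA.antisymm h), hs⟩
    (Finset.union_sdiff_of_subset hBA)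

theorem NonSeparableOn.not_subsingleton_insert (h : G.NonSeparableOn (insert e (A₁ ∪ A₂)))
    (he : e ∉ A₁) (hd : Disjoint A₁ A₂) (h₁ : A₁.Nonempty) :
    ¬ (G.support A₁ ∩ G.support (insert e A₂)).Subsingleton := fun hs =>
  h A₁ (insert e A₂) ⟨Finset.disjoint_insert_right.2 ⟨he, hd⟩, h₁, Finset.insert_nonempty _ _, hs⟩
    (Finset.union_insert _ _ _)

theorem NonSeparableOn.looplessOn (h : G.NonSeparableOn A) (hA : 2 ≤ A.card) :
    G.LooplessOn A := by
  intro e he hloop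
  refine h.not_subsingleton (Finset.singleton_subset_iff.2 he) (Finset.singleton_nonempty e)
    (by rintro rfl; simp at hA) ?_
  rw [support_singleton (G.isLink_fst_snd e), ← hloop, Set.pair_eq_singleton]
  exact Set.subsingleton_singleton.anti Set.inter_subset_left

theorem subset_of_not_subsingleton {α : Type*} {s : Set α} {a b : α} (h : ¬ s.Subsingleton)
    (hs : s ⊆ {a, b}) : {a, b} ⊆ s := by
  obtain ⟨x, hx, y, hy, hxy⟩ := Set.not_subsingleton_iff.1 h
  rcases hs hx with rfl | rfl <;> rcases hs hy with rfl | rfl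
  all_goals grind

theorem NonSeparableOn.ends_subset_support (h : G.NonSeparableOn (insert e (A₁ ∪ A₂)))
    (he : e ∉ A₁) (hd : Disjoint A₁ A₂) (h₁ : A₁.Nonempty) (hl : G.IsLink e a b)
    (hV : G.support A₁ ∩ G.support A₂ ⊆ {a, b}) : {a, b} ⊆ G.support A₁ := by
  refine (subset_of_not_subsingleton (h.not_subsingleton_insert he hd h₁) ?_).trans
    Set.inter_subset_left
  rw [hl.support_insert, Set.inter_union_distrib_left]
  exact Set.union_subset Set.inter_subset_right hV

theorem IsSeparation.exists_end_mem_support_left (hs : G.IsSeparation A₁ A₂)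
    (h : G.NonSeparableOn (insert e (A₁ ∪ A₂))) (he : e ∉ A₁) (hl : G.IsLink e a b) :
    ∃ v ∈ ({a, b} : Set V), v ∈ G.support A₁ \ G.support A₂ := by
  by_contra! hv
  refine h.not_subsingleton_insert he hs.disjoint hs.left_nonempty (hs.subsingleton.anti ?_)
  rw [hl.support_insert]
  rintro v ⟨hv₁, hvab | hv₂⟩
  · exact ⟨hv₁, not_not.1 fun hv₂ => hv v hvab ⟨hv₁, hv₂⟩⟩
  · exact ⟨hv₁, hv₂⟩

theorem IsSeparation.exists_separatesAt (hs : G.IsSeparation A₁ A₂)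
    (h : G.NonSeparableOn (insert e (A₁ ∪ A₂))) (he : e ∉ A₁) (hl : G.IsLink e a b)
    (ha : a ∈ G.support A₁ \ G.support A₂) (hb : b ∈ G.support A₂ \ G.support A₁) :
    ∃ x, G.SeparatesAt x a b A₁ A₂ := by
  rcases hs.subsingleton.eq_empty_or_singleton with hemp | ⟨x, hx⟩
  · refine absurd (Set.subsingleton_singleton (a := a) |>.anti ?_)
      (h.not_subsingleton_insert he hs.disjoint hs.left_nonempty)
    rw [hl.support_insert, Set.inter_union_distrib_left, hemp, Set.union_empty]
    rintro v ⟨hv, rfl | rfl⟩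
    exacts [rfl, absurd hv hb.2]
  · have hx' : x ∈ G.support A₁ ∩ G.support A₂ := hx.symm.subset rfl
    exact ⟨x, hs.disjoint, hx, ha.1, hb.1, fun h => ha.2 (h ▸ hx'.2), fun h => hb.2 (h ▸ hx'.1)⟩

theorem NonSeparableOn.exists_separatesAt (h : G.NonSeparableOn (insert e A)) (he : e ∉ A)
    (hl : G.IsLink e a b) (hA : ¬ G.NonSeparableOn A) :
    ∃ A₁ A₂ x, A₁ ∪ A₂ = A ∧ G.SeparatesAt x a b A₁ A₂ := by
  simp only [NonSeparableOn, not_forall, not_not] at hA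
  obtain ⟨A₁, A₂, hs, rfl⟩ := hA
  rw [Finset.notMem_union] at he
  have h' : G.NonSeparableOn (insert e (A₂ ∪ A₁)) := Finset.union_comm A₁ A₂ ▸ h
  obtain ⟨v, hvab, hv⟩ := hs.exists_end_mem_support_left h he.1 hl
  obtain ⟨w, hwab, hw⟩ := hs.symm.exists_end_mem_support_left h' he.2 hl
  rcases hvab with rfl | rfl <;> rcases hwab with rfl | rfl
  · exact absurd hv.1 hw.2
  · obtain ⟨x, hx⟩ := hs.exists_separatesAt h he.1 hl hv hw
    exact ⟨A₁, A₂, x, rfl, hx⟩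
  · obtain ⟨x, hx⟩ := hs.symm.exists_separatesAt h' he.2 hl hw hv
    exact ⟨A₂, A₁, x, Finset.union_comm _ _, hx⟩
  · exact absurd hv.1 hw.2

theorem NonSeparableOn.insert_of_endsEqOn (h : G.NonSeparableOn (insert e (A₁ ∪ A₂)))
    (hd : Disjoint A₁ A₂) (hH : G.EndsEqOn H A₁)
    (he : G.support A₁ ∩ G.support (insert e A₂) ⊆ H.support {e}) :
    H.NonSeparableOn (insert e A₁) := by
  have key : ∀ B C, H.IsSeparation B C → B ∪ C = insert e A₁ → e ∉ C := by
    intro B C hs hBC heC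
    have heB : e ∉ B := fun heB => Finset.disjoint_left.1 hs.disjoint heB heC
    have hBA : B ⊆ A₁ :=
      (Finset.subset_insert_iff_of_notMem heB).1 (hBC ▸ Finset.subset_union_left)
    have hCA : C.erase e ⊆ A₁ :=
      Finset.subset_insert_iff.1 (hBC ▸ Finset.subset_union_right)
    refine h B (C ∪ A₂) ⟨Finset.disjoint_union_right.2 ⟨hs.disjoint, hd.mono_left hBA⟩,
      hs.left_nonempty, hs.right_nonempty.mono Finset.subset_union_left, ?_⟩ ?_
    · refine hs.subsingleton.anti ?_
      rintro v ⟨hvB, hvC⟩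
      refine ⟨(hH.mono hBA).support_eq.symm.subset hvB, ?_⟩
      rw [← Finset.insert_erase heC, Finset.insert_union, ← Finset.union_insert,
        support_union] at hvC
      rcases hvC with hvC | hve
      · exact support_mono H (Finset.erase_subset e C) ((hH.mono hCA).support_eq.symm.subset hvC)
      · exact support_mono H (Finset.singleton_subset_iff.2 heC)
          (he ⟨support_mono G hBA hvB, hve⟩)
    · rw [← Finset.union_assoc, hBC, Finset.insert_union]
  intro B C hs hBC
  rcases Finset.mem_union.1 (hBC ▸ Finset.mem_insert_self e A₁) with heB | heC
  · exact key C B hs.symm (Finset.union_comm B C ▸ hBC) heB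
  · exact key B C hs hBC heC

theorem NonSeparableOn.insert_left (h : G.NonSeparableOn (insert e (A₁ ∪ A₂)))
    (hd : Disjoint A₁ A₂) (hl : G.IsLink e a b) (hV : G.support A₁ ∩ G.support A₂ ⊆ {a, b}) :
    G.NonSeparableOn (insert e A₁) := by
  refine h.insert_of_endsEqOn hd (EndsEqOn.refl G A₁) ?_
  rw [hl.support_insert, support_singleton hl, Set.inter_union_distrib_left]
  exact Set.union_subset Set.inter_subset_right hV

theorem SeparatesAt.nonSeparableOn_insert (hs : G.SeparatesAt x a b A₁ A₂)
    (h : G.NonSeparableOn (insert e (A₁ ∪ A₂))) (hl : G.IsLink e a b) (hH : G.EndsEqOn H A₁)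
    (hlH : H.IsLink e a x) : H.NonSeparableOn (insert e A₁) := by
  refine h.insert_of_endsEqOn hs.disjoint hH ?_
  rw [hl.support_insert, support_singleton hlH]
  rintro v ⟨hv₁, (rfl | rfl) | hv₂⟩
  · exact Or.inl rfl
  · exact absurd hv₁ hs.symm.left_notMem
  · exact Or.inr (hs.support_inter.subset ⟨hv₁, hv₂⟩)

end Separation

/-! ### Dominating cores -/

section Core

/-- The vertex set `S` induces a connected subgraph of the spanning subgraph with edge set `A`, in
the sense that some edge leaves every proper nonempty subset of `S` for another vertex of `S`. -/
def ConnectedOn (G : Multigraph V E) (A : Finset E) (S : Set V) : Prop :=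
  ∀ T ⊆ S, T.Nonempty → T ≠ S → ∃ u ∈ T, ∃ w ∈ S \ T, G.edgeRelOn A u w

open Classical in
/-- The edges in `A` with an end vertex in `S`. -/
noncomputable def edgesMeeting (G : Multigraph V E) (A : Finset E) (S : Set V) : Finset E :=
  {e ∈ A | ∃ u ∈ S, ∃ w, G.IsLink e u w}

/-- A connected set of vertices of degree at most `3` such that every vertex of larger degree has a
neighbour in it. -/
structure IsDominatingCore (G : Multigraph V E) (A : Finset E) (S : Set V) : Prop where
  nonempty : S.Nonempty
  subset_support : S ⊆ G.support A
  connectedOn : G.ConnectedOn A S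
  degreeOn_le : ∀ v ∈ S, G.degreeOn A v ≤ 3
  exists_adj : ∀ v, 3 < G.degreeOn A v → ∃ u ∈ S, G.edgeRelOn A v u

variable {G H : Multigraph V E} {A A' A₁ A₂ : Finset E} {S T : Set V} {e : E} {a b u v w x : V}

theorem mem_edgesMeeting : e ∈ G.edgesMeeting A S ↔ e ∈ A ∧ ∃ u ∈ S, ∃ w, G.IsLink e u w := by
  simp [edgesMeeting]

theorem mem_edgesMeeting_singleton :
    e ∈ G.edgesMeeting A {u} ↔ e ∈ A ∧ ∃ w, G.IsLink e u w := by
  simp [mem_edgesMeeting]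

theorem edgesMeeting_subset (G : Multigraph V E) (A : Finset E) (S : Set V) :
    G.edgesMeeting A S ⊆ A := fun _ he =>
  (mem_edgesMeeting.1 he).1

theorem IsLink.mem_edgesMeeting (h : G.IsLink e u w) (he : e ∈ A) (hu : u ∈ S) :
    e ∈ G.edgesMeeting A S :=
  Multigraph.mem_edgesMeeting.2 ⟨he, u, hu, w, h⟩

theorem edgesMeeting_nonempty (hv : v ∈ S) (hvA : v ∈ G.support A) :
    (G.edgesMeeting A S).Nonempty :=
  let ⟨e, he, _, hl⟩ := hvA
  ⟨e, hl.mem_edgesMeeting he hv⟩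

theorem exists_adj_of_mem_support_edgesMeeting (h : v ∈ G.support (G.edgesMeeting A S))
    (hv : v ∉ S) : ∃ u ∈ S, G.edgeRelOn A v u := by
  obtain ⟨e, he, w, hl⟩ := h
  obtain ⟨he, u, hu, w', hl'⟩ := mem_edgesMeeting.1 he
  exact ⟨u, hu, e, he, hl.of_ne hl' (ne_of_mem_of_not_mem hu hv).symm⟩

theorem disjoint_support_sdiff_edgesMeeting [DecidableEq E] :
    Disjoint S (G.support (A \ G.edgesMeeting A S)) :=
  Set.disjoint_left.2 fun _ hv ⟨_, he, _, hl⟩ =>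
    (Finset.mem_sdiff.1 he).2 (hl.mem_edgesMeeting (Finset.mem_sdiff.1 he).1 hv)

theorem IsLink.edgesMeeting_insert_subset [DecidableEq E] (hl : G.IsLink e a b) (ha : a ∉ S)
    (hb : b ∉ S) : G.edgesMeeting (insert e A) S ⊆ A := by
  intro g hg
  obtain ⟨hg, u, hu, w, hl'⟩ := Multigraph.mem_edgesMeeting.1 hg
  refine Finset.mem_of_mem_insert_of_ne hg ?_
  rintro rfl
  rcases hl.eq_or_eq hl' with rfl | rfl <;> contradiction

theorem connectedOn_singleton (G : Multigraph V E) (A : Finset E) (v : V) :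
    G.ConnectedOn A {v} := fun _ hT hne hTv =>
  absurd (hne.subset_singleton_iff.1 hT) hTv

theorem ConnectedOn.insert (h : G.ConnectedOn A S) (hu : u ∈ S) (huw : G.edgeRelOn A u w) :
    G.ConnectedOn A (insert w S) := by
  intro R hR hne hRS
  by_cases huR : u ∈ R
  · by_cases hSR : S ⊆ R
    · have hwR : w ∉ R := fun hwR => hRS (hR.antisymm (Set.insert_subset hwR hSR))
      exact ⟨u, huR, w, ⟨Set.mem_insert w S, hwR⟩, huw⟩
    · obtain ⟨u', hu', w', hw', hadj⟩ := h (S ∩ R) Set.inter_subset_left ⟨u, hu, huR⟩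
        (by rwa [Ne, Set.inter_eq_left])
      exact ⟨u', hu'.2, w', ⟨Or.inr hw'.1, fun hwR => hw'.2 ⟨hw'.1, hwR⟩⟩, hadj⟩
  by_cases hwR : w ∈ R
  · obtain ⟨g, hg, hl⟩ := huw
    exact ⟨w, hwR, u, ⟨Or.inr hu, huR⟩, g, hg, IsLink.symm hl⟩
  · have hRS' : R ⊆ S := (Set.subset_insert_iff_of_notMem hwR).1 hR
    obtain ⟨u', hu', w', hw', hadj⟩ := h R hRS' hne fun h => huR (h ▸ hu)
    exact ⟨u', hu', w', ⟨Or.inr hw'.1, hw'.2⟩, hadj⟩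

theorem ConnectedOn.of_endsEqOn (h : G.ConnectedOn A S) (hH : G.EndsEqOn H A) (hA : A ⊆ A') :
    H.ConnectedOn A' S := by
  intro T hT hne hTS
  obtain ⟨u, hu, w, hw, g, hg, hl⟩ := h T hT hne hTS
  exact ⟨u, hu, w, hw, g, hA hg, (hH.isLink_iff hg).2 hl⟩

theorem ConnectedOn.exists_diff_singleton [Finite V] (h : G.ConnectedOn A S) (hS : S.Nontrivial) :
    ∃ w ∈ S, (S \ {w}).Nonempty ∧ G.ConnectedOn A (S \ {w}) := by
  obtain ⟨v, hv⟩ := hS.nonempty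
  obtain ⟨T, ⟨hTS, hTne, hT, hTc⟩, hmax⟩ :=
    Set.Finite.exists_maximal (s := {T | T ⊆ S ∧ T ≠ S ∧ T.Nonempty ∧ G.ConnectedOn A T})
      (Set.toFinite _) ⟨{v}, Set.singleton_subset_iff.2 hv, hS.ne_singleton.symm,
        Set.singleton_nonempty v, connectedOn_singleton G A v⟩
  obtain ⟨u, hu, w, hw, huw⟩ := h T hTS hT hTne
  have hins : Insert.insert w T = S := by
    by_contra hne
    exact hw.2 (hmax ⟨Set.insert_subset hw.1 hTS, hne, Set.insert_nonempty _ _, hTc.insert hu huw⟩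
      (Set.subset_insert w T) (Set.mem_insert w T))
  refine ⟨w, hw.1, ?_⟩
  rw [← hins, Set.insert_sdiff_self_of_notMem hw.2]
  exact ⟨hT, hTc⟩

theorem IsDominatingCore.identify (h : G.IsDominatingCore A S) (ha : a ∉ S) (hb : b ∉ S)
    (hab : a ≠ b) (hadj : ∃ u ∈ S, G.edgeRelOn A a u) :
    (G.identify a b).IsDominatingCore A S := by
  have hne : ∀ v ∈ S, v ≠ a ∧ v ≠ b := fun v hv =>
    ⟨ne_of_mem_of_not_mem hv ha, ne_of_mem_of_not_mem hv hb⟩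
  refine ⟨h.nonempty, fun v hv => ?_, fun T hT hT₀ hTS => ?_, fun v hv => ?_, fun v hv => ?_⟩
  · simpa only [(hne v hv).2, if_false] using
      ite_mem_support_identify (a := a) (b := b) (h.subset_support hv)
  · obtain ⟨u, hu, w, hw, g, hg, hl⟩ := h.connectedOn T hT hT₀ hTS
    exact ⟨u, hu, w, hw, g, hg, IsLink.identify_of_ne hl (hne u (hT hu)).2 (hne w hw.1).2⟩
  · rw [degreeOn_identify (hne v hv).1 (hne v hv).2]
    exact h.degreeOn_le v hv
  have hvb : v ≠ b := by
    rintro rfl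
    rw [degreeOn_identify_right hab] at hv
    omega
  have hv' : ∃ u ∈ S, G.edgeRelOn A v u := by
    rcases eq_or_ne v a with rfl | hva
    · exact hadj
    · exact h.exists_adj v (degreeOn_identify hva hvb ▸ hv)
  obtain ⟨u, hu, g, hg, hl⟩ := hv'
  exact ⟨u, hu, g, hg, IsLink.identify_of_ne hl hvb (hne u hu).2⟩

variable [DecidableEq E]

theorem ConnectedOn.disjoint_support_or (h : G.ConnectedOn A S)
    (hS : G.edgesMeeting A S ⊆ A₁ ∪ A₂) (hV : Disjoint S (G.support A₁ ∩ G.support A₂)) :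
    Disjoint S (G.support A₁) ∨ Disjoint S (G.support A₂) := by
  by_contra! hcon
  obtain ⟨⟨v, hv, hv₁⟩, w, hw, hw₂⟩ :=
    hcon.imp Set.not_disjoint_iff.1 Set.not_disjoint_iff.1
  have hV' : ∀ z ∈ S, z ∈ G.support A₁ → z ∉ G.support A₂ := fun z hz hz₁ hz₂ =>
    Set.disjoint_left.1 hV hz ⟨hz₁, hz₂⟩
  obtain ⟨u, hu, z, hz, g, hg, hl⟩ := h (S ∩ G.support A₁) Set.inter_subset_left ⟨v, hv, hv₁⟩
    fun heq => hV' w hw (heq.symm.subset hw).2 hw₂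
  rcases Finset.mem_union.1 (hS (IsLink.mem_edgesMeeting hl hg hu.1)) with hg | hg
  · exact hz.2 ⟨hz.1, IsLink.mem_support (IsLink.symm hl) hg⟩
  · exact hV' u hu.1 hu.2 (IsLink.mem_support hl hg)

theorem ConnectedOn.inter_support (h : G.ConnectedOn A S) (hS : G.edgesMeeting A S ⊆ A₁ ∪ A₂)
    (hV : (G.support A₁ ∩ G.support A₂).Subsingleton) :
    G.ConnectedOn A₁ (S ∩ G.support A₁) := by
  have key : ∀ T ⊆ S ∩ G.support A₁, T.Nonempty → T ≠ S ∩ G.support A₁ →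
      Disjoint T (G.support A₂) → ∃ u ∈ T, ∃ w ∈ (S ∩ G.support A₁) \ T, G.edgeRelOn A₁ u w := by
    intro T hT hne hTS hT₂
    obtain ⟨u, hu, w, hw, g, hg, hl⟩ := h T (hT.trans Set.inter_subset_left) hne
      fun heq => hTS (hT.antisymm (heq ▸ Set.inter_subset_left))
    rcases Finset.mem_union.1 (hS (IsLink.mem_edgesMeeting hl hg (hT hu).1)) with hg | hg
    · exact ⟨u, hu, w, ⟨⟨hw.1, IsLink.mem_support (IsLink.symm hl) hg⟩, hw.2⟩, g, hg, hl⟩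
    · exact absurd (IsLink.mem_support hl hg) (Set.disjoint_left.1 hT₂ hu)
  intro T hT hne hTS
  by_cases hT₂ : Disjoint T (G.support A₂)
  · exact key T hT hne hTS hT₂
  obtain ⟨x, hx, hx₂⟩ := Set.not_disjoint_iff.1 hT₂
  obtain ⟨u, hu, w, hw, g, hg, hl⟩ := key ((S ∩ G.support A₁) \ T) Set.sdiff_subset
    (Set.sdiff_nonempty.2 fun h => hTS (hT.antisymm h))
    (fun heq => (heq.symm.subset (hT hx)).2 hx)
    (Set.disjoint_left.2 fun y hy hy₂ =>
      hy.2 (hV ⟨(hT hx).2, hx₂⟩ ⟨hy.1.2, hy₂⟩ ▸ hx))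
  exact ⟨w, not_not.1 fun hwT => hw.2 ⟨hw.1, hwT⟩, u, hu, g, hg, IsLink.symm hl⟩

theorem IsDominatingCore.restrict (h : G.IsDominatingCore A S) (hS : G.edgesMeeting A S ⊆ A₁ ∪ A₂)
    (hV : (G.support A₁ ∩ G.support A₂).Subsingleton) (hne : (S ∩ G.support A₁).Nonempty)
    (hA : A₁ ⊆ A') (hH : G.EndsEqOn H A₁) (hsupp : H.support A' ⊆ G.support A₁)
    (hdeg : ∀ v, H.degreeOn A' v ≤ G.degreeOn A v) :
    H.IsDominatingCore A' (S ∩ G.support A₁) where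
  nonempty := hne
  subset_support := Set.inter_subset_right.trans (hH.support_eq ▸ support_mono H hA)
  connectedOn := (h.connectedOn.inter_support hS hV).of_endsEqOn hH hA
  degreeOn_le v hv := (hdeg v).trans (h.degreeOn_le v hv.1)
  exists_adj v hv := by
    have hv₁ : v ∈ G.support A₁ := hsupp (mem_support_of_degreeOn_pos (by omega))
    have hvA : 3 < G.degreeOn A v := hv.trans_le (hdeg v)
    obtain ⟨u, hu, g, hg, hl⟩ := h.exists_adj v hvA
    rcases Finset.mem_union.1 (hS (IsLink.mem_edgesMeeting (IsLink.symm hl) hg hu)) with hg | hg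
    · exact ⟨u, ⟨hu, IsLink.mem_support (IsLink.symm hl) hg⟩, g, hA hg, (hH.isLink_iff hg).2 hl⟩
    have hvS : v ∉ S := fun hvS => (h.degreeOn_le v hvS).not_gt hvA
    have hvV : v ∈ G.support A₁ ∩ G.support A₂ := ⟨hv₁, IsLink.mem_support hl hg⟩
    rcases h.connectedOn.disjoint_support_or hS
      (Set.disjoint_left.2 fun z hz hzV => hvS (hV hzV hvV ▸ hz)) with hd | hd
    · exact absurd hne (Set.not_nonempty_iff_eq_empty.2 hd.inter_eq)
    · exact absurd (IsLink.mem_support (IsLink.symm hl) hg) (Set.disjoint_left.1 hd hu)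

theorem SeparatesAt.exists_isDominatingCore (hs : G.SeparatesAt x a b A₁ A₂)
    (h : G.IsDominatingCore (insert e (A₁ ∪ A₂)) S) (he : e ∉ A₁ ∪ A₂) (ha : a ∉ S) (hb : b ∉ S)
    (hl : G.IsLink e a b) (hH : G.EndsEqOn H A₁) (hlH : H.IsLink e a x) :
    ∃ S', H.IsDominatingCore (insert e A₁) S' := by
  have hS : G.edgesMeeting (insert e (A₁ ∪ A₂)) S ⊆ A₁ ∪ A₂ := hl.edgesMeeting_insert_subset ha hb
  have hsupp : H.support (insert e A₁) = G.support A₁ := by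
    rw [hlH.support_insert, hH.support_eq, Set.union_eq_right]
    rintro v (rfl | rfl)
    exacts [hs.left_mem, hs.mem_left]
  have hdeg : ∀ v, H.degreeOn (insert e A₁) v ≤ G.degreeOn (insert e (A₁ ∪ A₂)) v := by
    intro v
    classical
    rw [hlH.degreeOn_insert (fun h => he (Finset.mem_union_left _ h)), hl.degreeOn_insert he,
      degreeOn_union hs.disjoint, hH.degreeOn_eq]
    have := degreeOn_pos hs.symm.mem_left
    grind
  by_cases hne : (S ∩ G.support A₁).Nonempty
  · exact ⟨_, h.restrict hS hs.subsingleton hne (Finset.subset_insert e A₁) hH hsupp.subset hdeg⟩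
  have hadj : ∀ v ∈ G.support A₁, 3 < H.degreeOn (insert e A₁) v → v = x := by
    intro v hv hv₃
    obtain ⟨u, hu, g, hg, hl'⟩ := h.exists_adj v (hv₃.trans_le (hdeg v))
    rcases Finset.mem_union.1 (hS (IsLink.mem_edgesMeeting (IsLink.symm hl') hg hu)) with hg | hg
    · exact absurd ⟨u, hu, IsLink.mem_support (IsLink.symm hl') hg⟩ hne
    · exact hs.support_inter.subset ⟨hv, IsLink.mem_support hl' hg⟩
  refine ⟨{a}, Set.singleton_nonempty a, ?_, connectedOn_singleton H _ a, ?_, ?_⟩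
  · rw [hsupp, Set.singleton_subset_iff]
    exact hs.left_mem
  · rintro v rfl
    by_contra! hv
    exact hs.left_ne (hadj v hs.left_mem hv)
  · intro v hv
    obtain rfl := hadj v (hsupp.subset (mem_support_of_degreeOn_pos (by omega))) hv
    exact ⟨a, rfl, e, Finset.mem_insert_self _ _, hlH.symm⟩

end Core

section MinimalCore

variable {G : Multigraph V E} {A A' : Finset E} {S : Set V} {e : E} {a b v w : V}

theorem IsDominatingCore.of_edgesMeeting_subset (h : G.IsDominatingCore A S) (hA : A' ⊆ A)
    (hS : G.edgesMeeting A S ⊆ A') : G.IsDominatingCore A' S := by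
  classical
  have hSA : S ⊆ G.support A' := fun v hv =>
    let ⟨e, he, w, hl⟩ := h.subset_support hv
    hl.mem_support (hS (hl.mem_edgesMeeting he hv))
  rw [← Set.inter_eq_left.2 hSA]
  refine h.restrict (A₂ := ∅) (by simpa using hS) (by simp [support])
    (by rw [Set.inter_eq_left.2 hSA]; exact h.nonempty) subset_rfl (EndsEqOn.refl G A') subset_rfl
    fun v => degreeOn_mono hA v

theorem degreeOn_le_of_forall_isLink (hl : G.LooplessOn A)
    (h : ∀ e ∈ A, ∀ u, G.IsLink e v u → u = w) : G.degreeOn A v ≤ G.degreeOn A w := by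
  refine Finset.sum_le_sum fun e he => ?_
  have hne := hl e he
  have hfst : G.fst e = v → G.snd e = w := fun hv => h e he _ (Or.inl ⟨hv, rfl⟩)
  have hsnd : G.snd e = v → G.fst e = w := fun hv => h e he _ (Or.inr ⟨rfl, hv⟩)
  grind

theorem mem_of_edgesMeeting_eq (hA : G.edgesMeeting A S = A) (he : e ∈ A) (hl : G.IsLink e v w)
    (hv : v ∉ S) : w ∈ S := by
  rw [← hA] at he
  obtain ⟨u, hu, w', hl'⟩ := (mem_edgesMeeting.1 he).2
  rcases hl.eq_or_eq hl' with rfl | rfl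
  exacts [absurd hu hv, hu]

theorem IsDominatingCore.diff_singleton (h : G.IsDominatingCore A S) (hl : G.LooplessOn A)
    (hA : G.edgesMeeting A S = A) (hw : w ∈ S) (hne : (S \ {w}).Nonempty)
    (hc : G.ConnectedOn A (S \ {w})) : G.IsDominatingCore A (S \ {w}) := by
  refine ⟨hne, Set.sdiff_subset.trans h.subset_support, hc, fun v hv => h.degreeOn_le v hv.1,
    fun v hv => ?_⟩
  by_contra! hcon
  have hvS : v ∉ S := fun hvS => (h.degreeOn_le v hvS).not_gt hv
  refine (h.degreeOn_le w hw).not_gt (hv.trans_le (degreeOn_le_of_forall_isLink hl ?_))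
  intro e he u hvu
  by_contra huw
  exact hcon u ⟨mem_of_edgesMeeting_eq hA he hvu hvS, huw⟩ ⟨e, he, hvu⟩

theorem IsDominatingCore.exists_eq_singleton [Finite V] (h : G.IsDominatingCore A S)
    (hl : G.LooplessOn A) :
    ∃ S', G.IsDominatingCore A S' ∧ (G.edgesMeeting A S' = A → ∃ u, S' = {u}) := by
  obtain ⟨S', hS', hmin⟩ := Set.Finite.exists_minimal (s := {T | G.IsDominatingCore A T})
    (Set.toFinite _) ⟨S, h⟩
  refine ⟨S', hS', fun hA => ?_⟩
  rcases S'.subsingleton_or_nontrivial with hsub | hnt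
  · exact (Set.exists_eq_singleton_iff_nonempty_subsingleton).2 ⟨hS'.nonempty, hsub⟩
  · obtain ⟨w, hw, hne, hc⟩ := hS'.connectedOn.exists_diff_singleton hnt
    exact absurd rfl (hmin (hS'.diff_singleton hl hA hw hne hc) Set.sdiff_subset hw).2

variable [DecidableEq E]

theorem NonSeparableOn.exists_isLink_adj (h : G.NonSeparableOn A) (hS : G.IsDominatingCore A S)
    (hA : G.edgesMeeting A S ≠ A) :
    ∃ e ∈ A, ∃ a b, G.IsLink e a b ∧ a ∉ S ∧ b ∉ S ∧ ∃ u ∈ S, G.edgeRelOn A a u := by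
  obtain ⟨v, hv⟩ := hS.nonempty
  obtain ⟨a, ⟨haS, e, he, b, hl⟩, -⟩ := Set.not_subsingleton_iff.1 <|
    h.not_subsingleton (edgesMeeting_subset G A S)
      (edgesMeeting_nonempty hv (hS.subset_support hv)) hA
  have hout : ∀ w ∈ G.support (A \ G.edgesMeeting A S), w ∉ S := fun w hw hwS =>
    Set.disjoint_left.1 disjoint_support_sdiff_edgesMeeting hwS hw
  have ha := hout a (hl.mem_support he)
  exact ⟨e, (Finset.mem_sdiff.1 he).1, a, b, hl, ha, hout b (hl.symm.mem_support he),
    exists_adj_of_mem_support_edgesMeeting haS ha⟩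

theorem NonSeparableOn.subset_support_edgesMeeting (h : G.NonSeparableOn A) (hv : v ∈ S)
    (hvA : v ∈ G.support A) (hS : G.support (G.edgesMeeting A S) ⊆ S ∪ {a, b}) :
    G.edgesMeeting A S = A ∨ {a, b} ⊆ G.support (G.edgesMeeting A S) := by
  refine or_iff_not_imp_left.2 fun hA => ?_
  refine (subset_of_not_subsingleton (h.not_subsingleton (edgesMeeting_subset G A S)
    (edgesMeeting_nonempty hv hvA) hA) ?_).trans Set.inter_subset_left
  rintro z ⟨hz, hz'⟩
  exact (hS hz).resolve_left fun hzS =>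
    Set.disjoint_left.1 disjoint_support_sdiff_edgesMeeting hzS hz'

theorem NonSeparableOn.exists_isDominatingCore [Finite V] (h : G.NonSeparableOn A)
    (hv : v ∈ G.support A) (hva : v ≠ a) (hvb : v ≠ b)
    (hdeg : ∀ w, w ≠ a → w ≠ b → G.degreeOn A w ≤ 3) : ∃ S, G.IsDominatingCore A S := by
  obtain ⟨S, ⟨hSA, hSab, hvS, hc⟩, hmax⟩ := Set.Finite.exists_maximal
    (s := {T | T ⊆ G.support A ∧ Disjoint T {a, b} ∧ v ∈ T ∧ G.ConnectedOn A T}) (Set.toFinite _)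
    ⟨{v}, Set.singleton_subset_iff.2 hv, by simp [hva, hvb], rfl, connectedOn_singleton G A v⟩
  have hS : G.support (G.edgesMeeting A S) ⊆ S ∪ {a, b} := by
    intro z hz
    by_contra! hz'
    rw [Set.mem_union, not_or] at hz'
    obtain ⟨u, hu, e, he, hl⟩ := exists_adj_of_mem_support_edgesMeeting hz hz'.1
    exact hz'.1 (hmax ⟨Set.insert_subset (IsLink.mem_support hl he) hSA,
      Set.disjoint_insert_left.2 ⟨hz'.2, hSab⟩, Or.inr hvS,
      hc.insert hu ⟨e, he, IsLink.symm hl⟩⟩ (Set.subset_insert z S) (Set.mem_insert z S))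
  refine ⟨S, ⟨v, hvS⟩, hSA, hc, fun w hw => ?_, fun w hw => ?_⟩
  · have := Set.disjoint_left.1 hSab hw
    exact hdeg w (fun h => this (Or.inl h)) fun h => this (Or.inr h)
  have hwab : w ∈ ({a, b} : Set V) := by
    by_contra hcon
    exact (hdeg w (fun h => hcon (Or.inl h)) fun h => hcon (Or.inr h)).not_gt hw
  refine exists_adj_of_mem_support_edgesMeeting ?_ fun hwS => Set.disjoint_left.1 hSab hwS hwab
  rcases h.subset_support_edgesMeeting hvS hv hS with hA | hab
  · rw [hA]
    exact mem_support_of_degreeOn_pos (by omega)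
  · exact hab hwab

theorem NonSeparableOn.incVec_mem_span (h : G.NonSeparableOn (insert e A)) (he : e ∉ A)
    (hA : A.Nonempty) : G.incVec e ∈ span ℚ G.incVec A := by
  obtain ⟨a, b, hl⟩ : ∃ a b, G.IsLink e a b := ⟨_, _, G.isLink_fst_snd e⟩
  refine hl.incVec_mem.2 ?_
  by_contra hb
  set K : Set V := {v | diffVec a v ∈ span ℚ G.incVec A}
  have hK : ∀ g ∈ A, ∀ u w, G.IsLink g u w → u ∈ K → w ∈ K := fun g hg u w hl hu =>
    show diffVec a w ∈ span ℚ G.incVec A from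
      diffVec_add a u w ▸ add_mem hu (hl.incVec_mem.1 (mem_span ℚ hg))
  have haK : a ∈ K := by simp [K, diffVec_self]
  have hsub : G.support (G.edgesMeeting A K) ⊆ K := by
    rintro v ⟨g, hg, w, hl⟩
    obtain ⟨hg, u, hu, w', hl'⟩ := mem_edgesMeeting.1 hg
    rcases hl.eq_or_eq hl' with rfl | rfl
    exacts [hu, hK g hg _ _ hl.symm hu]
  have hunion := Finset.union_sdiff_of_subset (edgesMeeting_subset G A K)
  rcases (G.edgesMeeting A K).eq_empty_or_nonempty with hemp | hne
  · have haA : a ∉ G.support A := fun ⟨g, hg, w, hl⟩ =>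
      Finset.notMem_empty g (hemp ▸ hl.mem_edgesMeeting hg haK)
    refine h {e} A ⟨by simpa using he, Finset.singleton_nonempty e, hA, ?_⟩ rfl
    refine (Set.subsingleton_singleton (a := b)).anti ?_
    rw [support_singleton hl]
    rintro v ⟨rfl | rfl, hv⟩
    exacts [absurd hv haA, rfl]
  · refine (hunion.symm ▸ h).not_subsingleton_insert (fun h => he (edgesMeeting_subset G A K h))
      Finset.disjoint_sdiff hne ((Set.subsingleton_singleton (a := a)).anti ?_)
    rw [hl.support_insert]
    rintro v ⟨hv, (rfl | rfl) | hv'⟩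
    · rfl
    · exact absurd (hsub hv) hb
    · exact absurd hv' (Set.disjoint_left.1 disjoint_support_sdiff_edgesMeeting (hsub hv))

end MinimalCore

/-! ### Vanishing of the normalized flow sum -/

section Vanishing

variable {G : Multigraph V E} {A A₁ A₂ : Finset E} {e : E} {a b v x : V} {q : ℝ}

theorem normFlow_singleton (hq : q ≠ 0) (he : G.fst e ≠ G.snd e) :
    normFlow ℚ q G.incVec {e} = 0 := by
  classical
  by_contra h
  have hmem := mem_span_erase_of_normFlow_ne_zero hq (Finset.mem_singleton_self e) h
  refine (G.isLink_fst_snd e).incVec_ne_zero he ?_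
  simpa [VectorConfiguration.span] using hmem

theorem normFlow_eq_zero_of_degreeOn_le_one (hq : q ≠ 0) (hl : G.LooplessOn A)
    (hv : v ∈ G.support A) (hdeg : G.degreeOn A v ≤ 1) : normFlow ℚ q G.incVec A = 0 := by
  classical
  obtain ⟨e, he, w, hlink⟩ := hv
  by_contra h
  refine hlink.incVec_apply_ne_zero (hlink.ne (hl e he))
    (eq_zero_of_mem_span (mem_span_erase_of_normFlow_ne_zero hq he h) ?_)
  rw [← Finset.insert_erase he, hlink.degreeOn_insert (Finset.notMem_erase e A), if_pos rfl] at hdeg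
  exact degreeOn_eq_zero_iff.1 (by omega)

variable [Finite V] [DecidableEq E]

theorem normFlow_union_eq_zero (hd : Disjoint A₁ A₂)
    (hV : (G.support A₁ ∩ G.support A₂).Subsingleton)
    (h : normFlow ℚ q G.incVec A₁ = 0 ∨ normFlow ℚ q G.incVec A₂ = 0) :
    normFlow ℚ q G.incVec (A₁ ∪ A₂) = 0 := by
  simp only [normFlow_eq_zero] at h ⊢
  rw [flowSum_union_of_disjoint hd (disjoint_span hV)]
  exact mul_eq_zero.2 h

theorem SeparatesAt.normFlow_eq_zero (hs : G.SeparatesAt x a b A₁ A₂) (hq : q ≠ 0)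
    (hl : G.LooplessOn (A₁ ∪ A₂)) (hdeg : G.degreeOn (A₁ ∪ A₂) x ≤ 3) :
    normFlow ℚ q G.incVec (A₁ ∪ A₂) = 0 := by
  refine normFlow_union_eq_zero hs.disjoint hs.subsingleton ?_
  rw [degreeOn_union hs.disjoint] at hdeg
  rcases le_or_gt (G.degreeOn A₁ x) 1 with h | h
  · exact Or.inl (normFlow_eq_zero_of_degreeOn_le_one hq
      (fun e he => hl e (Finset.mem_union_left _ he)) hs.mem_left h)
  · exact Or.inr (normFlow_eq_zero_of_degreeOn_le_one hq
      (fun e he => hl e (Finset.mem_union_right _ he)) hs.symm.mem_left (by omega))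

end Vanishing

/-! ### The induction -/

section Induction

/-- The induction hypothesis: positivity of the normalized flow sum for the non-separable sets of
fewer than `n` edges, not a single edge, that have a dominating core. -/
def NormFlowPosBelow (V E : Type) [DecidableEq E] (q : ℝ) (n : ℕ) : Prop :=
  ∀ (G : Multigraph V E) (A : Finset E) (S : Set V), A.card < n → 2 ≤ A.card →
    G.NonSeparableOn A → G.IsDominatingCore A S → 0 < normFlow ℚ q G.incVec A

/-- The edge `e`, with end vertices `a` and `b`, completes `A` to a non-separable set, and both
`a` and `b` lie outside a dominating core `S` of that set. -/
structure AvoidsCore [DecidableEq E] (G : Multigraph V E) (A : Finset E) (S : Set V) (e : E)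
    (a b : V) : Prop where
  nonSeparableOn : G.NonSeparableOn (insert e A)
  isDominatingCore : G.IsDominatingCore (insert e A) S
  notMem : e ∉ A
  isLink : G.IsLink e a b
  left_notMem : a ∉ S
  right_notMem : b ∉ S

/-- In the situation of `AvoidsCore`, the end vertices of `e` separate `A₁` from `A₂`, and the core
lies on the side of `A₁`. -/
structure TwoCut [DecidableEq E] (G : Multigraph V E) (A₁ A₂ : Finset E) (S : Set V) (e : E)
    (a b : V) : Prop extends G.AvoidsCore (A₁ ∪ A₂) S e a b where
  disjoint : Disjoint A₁ A₂
  support_inter_subset : G.support A₁ ∩ G.support A₂ ⊆ {a, b}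
  disjoint_support_right : Disjoint S (G.support A₂)
  right_nonempty : A₂.Nonempty

variable [DecidableEq E] {G : Multigraph V E} {A A₁ A₂ B₁ B₂ : Finset E} {S : Set V} {e f : E}
  {a b u v x : V} {q : ℝ}

theorem AvoidsCore.symm (h : G.AvoidsCore A S e a b) : G.AvoidsCore A S e b a :=
  ⟨h.nonSeparableOn, h.isDominatingCore, h.notMem, h.isLink.symm, h.right_notMem, h.left_notMem⟩

theorem TwoCut.symm (h : G.TwoCut A₁ A₂ S e a b) : G.TwoCut A₁ A₂ S e b a :=
  ⟨h.toAvoidsCore.symm, h.disjoint, Set.pair_comm a b ▸ h.support_inter_subset,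
    h.disjoint_support_right, h.right_nonempty⟩

theorem AvoidsCore.edgesMeeting_subset (h : G.AvoidsCore A S e a b) :
    G.edgesMeeting (insert e A) S ⊆ A :=
  h.isLink.edgesMeeting_insert_subset h.left_notMem h.right_notMem

theorem AvoidsCore.isDominatingCore_deleteEdge (h : G.AvoidsCore A S e a b) :
    G.IsDominatingCore A S :=
  h.isDominatingCore.of_edgesMeeting_subset (Finset.subset_insert e A) h.edgesMeeting_subset

theorem AvoidsCore.nonempty (h : G.AvoidsCore A S e a b) : A.Nonempty :=
  let ⟨_, hu⟩ := h.isDominatingCore_deleteEdge.nonempty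
  let ⟨g, hg, _⟩ := h.isDominatingCore_deleteEdge.subset_support hu
  ⟨g, hg⟩

theorem AvoidsCore.looplessOn (h : G.AvoidsCore A S e a b) : G.LooplessOn (insert e A) :=
  h.nonSeparableOn.looplessOn <| by
    rw [Finset.card_insert_of_notMem h.notMem]
    exact Nat.succ_le_succ h.nonempty.card_pos

theorem AvoidsCore.ne (h : G.AvoidsCore A S e a b) : a ≠ b :=
  h.isLink.ne (h.looplessOn e (Finset.mem_insert_self e A))

theorem AvoidsCore.two_le_card (h : G.AvoidsCore A S e a b) : 2 ≤ A.card := by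
  by_contra! hcard
  obtain ⟨f, rfl⟩ := Finset.card_eq_one.1 (Nat.le_antisymm (Nat.lt_succ_iff.1 hcard)
    h.nonempty.card_pos)
  have hends : {a, b} ⊆ G.support {f} :=
    NonSeparableOn.ends_subset_support (A₂ := ∅) (by simpa using h.nonSeparableOn) h.notMem
      (Finset.disjoint_empty_right _) (Finset.singleton_nonempty f) h.isLink (by simp [support])
  obtain ⟨u, hu⟩ := h.isDominatingCore_deleteEdge.nonempty
  have huf := h.isDominatingCore_deleteEdge.subset_support hu
  rw [support_singleton (G.isLink_fst_snd f)] at hends huf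
  have hua := ne_of_mem_of_not_mem hu h.left_notMem
  have hub := ne_of_mem_of_not_mem hu h.right_notMem
  have hab := h.ne
  have ha := hends (Set.mem_insert a {b})
  have hb := hends (Set.mem_insert_of_mem a rfl)
  simp only [Set.mem_insert_iff, Set.mem_singleton_iff] at ha hb huf
  grind

theorem TwoCut.notMem_left (h : G.TwoCut A₁ A₂ S e a b) : e ∉ A₁ := fun he =>
  h.notMem (Finset.mem_union_left _ he)

theorem TwoCut.notMem_right (h : G.TwoCut A₁ A₂ S e a b) : e ∉ A₂ := fun he =>
  h.notMem (Finset.mem_union_right _ he)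

theorem TwoCut.looplessOn_left (h : G.TwoCut A₁ A₂ S e a b) : G.LooplessOn A₁ := fun g hg =>
  h.looplessOn g (Finset.mem_insert_of_mem (Finset.mem_union_left _ hg))

theorem TwoCut.looplessOn_right (h : G.TwoCut A₁ A₂ S e a b) : G.LooplessOn A₂ := fun g hg =>
  h.looplessOn g (Finset.mem_insert_of_mem (Finset.mem_union_right _ hg))

theorem TwoCut.edgesMeeting_subset_left (h : G.TwoCut A₁ A₂ S e a b) :
    G.edgesMeeting (insert e (A₁ ∪ A₂)) S ⊆ A₁ := by
  intro g hg
  refine (Finset.mem_union.1 (h.edgesMeeting_subset hg)).resolve_right fun hg₂ => ?_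
  obtain ⟨-, u, hu, w, hl⟩ := mem_edgesMeeting.1 hg
  exact Set.disjoint_left.1 h.disjoint_support_right hu (hl.mem_support hg₂)

theorem TwoCut.isDominatingCore_left (h : G.TwoCut A₁ A₂ S e a b) : G.IsDominatingCore A₁ S :=
  h.isDominatingCore.of_edgesMeeting_subset
    (Finset.subset_union_left.trans (Finset.subset_insert _ _)) h.edgesMeeting_subset_left

theorem TwoCut.isDominatingCore_insert_left (h : G.TwoCut A₁ A₂ S e a b) :
    G.IsDominatingCore (insert e A₁) S :=
  h.isDominatingCore.of_edgesMeeting_subset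
    (Finset.insert_subset_insert e Finset.subset_union_left)
    (h.edgesMeeting_subset_left.trans (Finset.subset_insert e A₁))

theorem TwoCut.left_nonempty (h : G.TwoCut A₁ A₂ S e a b) : A₁.Nonempty :=
  let ⟨_, hu⟩ := h.isDominatingCore_left.nonempty
  let ⟨g, hg, _⟩ := h.isDominatingCore_left.subset_support hu
  ⟨g, hg⟩

theorem TwoCut.nonSeparableOn_insert_left (h : G.TwoCut A₁ A₂ S e a b) :
    G.NonSeparableOn (insert e A₁) :=
  h.nonSeparableOn.insert_left h.disjoint h.isLink h.support_inter_subset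

theorem TwoCut.nonSeparableOn_comm (h : G.TwoCut A₁ A₂ S e a b) :
    G.NonSeparableOn (insert e (A₂ ∪ A₁)) :=
  Finset.union_comm A₁ A₂ ▸ h.nonSeparableOn

theorem TwoCut.nonSeparableOn_insert_right (h : G.TwoCut A₁ A₂ S e a b) :
    G.NonSeparableOn (insert e A₂) :=
  h.nonSeparableOn_comm.insert_left h.disjoint.symm h.isLink
    (Set.inter_comm _ _ ▸ h.support_inter_subset)

theorem TwoCut.card_insert (h : G.TwoCut A₁ A₂ S e a b) :
    (insert e (A₁ ∪ A₂)).card = A₁.card + A₂.card + 1 := by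
  rw [Finset.card_insert_of_notMem h.notMem, Finset.card_union_of_disjoint h.disjoint]

theorem TwoCut.ends_subset_support_right (h : G.TwoCut A₁ A₂ S e a b) : {a, b} ⊆ G.support A₂ :=
  h.nonSeparableOn_comm.ends_subset_support h.notMem_right h.disjoint.symm h.right_nonempty
    h.isLink (Set.inter_comm _ _ ▸ h.support_inter_subset)

theorem TwoCut.degreeOn_le_one (h : G.TwoCut (B₁ ∪ B₂) A₂ S e a b)
    (hs : G.SeparatesAt x a b B₁ B₂) (hS : Disjoint S (G.support B₁)) : G.degreeOn B₁ a ≤ 1 := by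
  classical
  have hdeg : G.degreeOn (insert e (B₁ ∪ B₂ ∪ A₂)) a ≤ 3 := by
    by_contra! hdeg
    obtain ⟨u, hu, g, hg, hl⟩ := h.isDominatingCore.exists_adj a hdeg
    have hgB := h.edgesMeeting_subset_left (IsLink.mem_edgesMeeting (IsLink.symm hl) hg hu)
    rcases Finset.mem_union.1 hgB with hg | hg
    · exact Set.disjoint_left.1 hS hu (IsLink.mem_support (IsLink.symm hl) hg)
    · exact hs.left_notMem (IsLink.mem_support hl hg)
  rw [h.isLink.degreeOn_insert h.notMem, degreeOn_union h.disjoint, degreeOn_union hs.disjoint,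
    if_pos rfl] at hdeg
  have := degreeOn_pos (h.ends_subset_support_right (Set.mem_insert a {b}))
  omega

theorem NormFlowPosBelow.nonneg {n : ℕ} (ih : NormFlowPosBelow V E q n) (hq : q ≠ 0)
    (hn : A.card < n) (hne : A.Nonempty) (hl : G.LooplessOn A) (h : G.NonSeparableOn A)
    (hS : G.IsDominatingCore A S) : 0 ≤ normFlow ℚ q G.incVec A := by
  rcases lt_or_ge A.card 2 with hcard | hcard
  · obtain ⟨f, rfl⟩ := Finset.card_eq_one.1 (Nat.le_antisymm (Nat.lt_succ_iff.1 hcard)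
      hne.card_pos)
    exact (normFlow_singleton hq (hl f (Finset.mem_singleton_self f))).ge
  · exact (ih G A S hn hcard h hS).le

theorem TwoCut.degreeOn_insert_right_le (h : G.TwoCut A₁ A₂ S e a b) (hva : v ≠ a) (hvb : v ≠ b) :
    G.degreeOn (insert e A₂) v ≤ 3 := by
  by_cases hv : v ∈ G.support A₂
  · refine (degreeOn_mono
      (Finset.insert_subset_insert e (Finset.subset_union_right (s₁ := A₁))) v).trans ?_
    by_contra! hdeg
    obtain ⟨u, hu, g, hg, hl⟩ := h.isDominatingCore.exists_adj v hdeg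
    have hg₁ : g ∈ A₁ :=
      h.edgesMeeting_subset_left (IsLink.mem_edgesMeeting (IsLink.symm hl) hg hu)
    have hvab := h.support_inter_subset ⟨IsLink.mem_support hl hg₁, hv⟩
    simp [hva, hvb] at hvab
  · classical
    have := h.isLink.degreeOn_insert h.notMem_right v
    rw [degreeOn_eq_zero_iff.2 hv, if_neg hva.symm, if_neg hvb.symm] at this
    omega

theorem TwoCut.exists_mem_support_right (h : G.TwoCut A₁ A₂ S e a b)
    (hpar : ∀ f ∈ A₂, ¬ G.IsLink f a b) : ∃ v ∈ G.support A₂, v ≠ a ∧ v ≠ b := by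
  by_contra! hv
  obtain ⟨f, hf⟩ := h.right_nonempty
  have hl := G.isLink_fst_snd f
  have hne := h.looplessOn_right f hf
  have hfst := hv _ (hl.mem_support hf)
  have hsnd := hv _ (hl.symm.mem_support hf)
  exact hpar f hf (by grind [IsLink])

theorem AvoidsCore.normFlow_reattach_pos (h : G.AvoidsCore (A₁ ∪ A₂) S e a b)
    (hs : G.SeparatesAt x a b A₁ A₂) (ih : NormFlowPosBelow V E q (insert e (A₁ ∪ A₂)).card) :
    (G.reattach e b x).incVec e ∈ span ℚ G.incVec A₁ ∧
      0 < normFlow ℚ q (G.reattach e b x).incVec (insert e A₁) := by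
  have he := Finset.notMem_union.1 h.notMem
  have hends : G.EndsEqOn (G.reattach e b x) A₁ := endsEqOn_reattach he.1
  have hl : (G.reattach e b x).IsLink e a x := h.isLink.reattach h.ne
  have hns := hs.nonSeparableOn_insert h.nonSeparableOn h.isLink hends hl
  obtain ⟨T, hT⟩ := hs.exists_isDominatingCore h.isDominatingCore h.notMem h.left_notMem
    h.right_notMem h.isLink hends hl
  have hcard := Finset.card_insert_of_notMem h.notMem
  have hcard₁ := Finset.card_insert_of_notMem he.1
  have hunion := Finset.card_union_of_disjoint hs.disjoint
  have hpos₁ := hs.left_nonempty.card_pos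
  have hpos₂ := hs.symm.left_nonempty.card_pos
  refine ⟨?_, ih _ _ T (by omega) (by omega) hns hT⟩
  rw [← span_congr ℚ hends.eqOn_incVec]
  exact hns.incVec_mem_span he.1 hs.left_nonempty

theorem NonSeparableOn.support_inter_subset_of_identify (h : G.NonSeparableOn (A₁ ∪ A₂))
    (hs : (G.identify a b).IsSeparation A₁ A₂) : G.support A₁ ∩ G.support A₂ ⊆ {a, b} := by
  classical
  have hmap : ∀ v ∈ G.support A₁ ∩ G.support A₂, (if v = b then a else v) ∈
      (G.identify a b).support A₁ ∩ (G.identify a b).support A₂ := fun v hv =>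
    ⟨ite_mem_support_identify hv.1, ite_mem_support_identify hv.2⟩
  obtain ⟨v, hv, w, hw, hvw⟩ := Set.not_subsingleton_iff.1 fun hsub =>
    h A₁ A₂ ⟨hs.disjoint, hs.left_nonempty, hs.right_nonempty, hsub⟩ rfl
  have ha : a ∈ (G.identify a b).support A₁ ∩ (G.identify a b).support A₂ := by
    have := hs.subsingleton (hmap v hv) (hmap w hw)
    grind
  intro z hz
  have := hs.subsingleton (hmap z hz) ha
  grind

theorem AvoidsCore.exists_twoCut (h : G.AvoidsCore A S e a b) (hA : G.NonSeparableOn A)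
    (hcon : ¬ (G.identify a b).NonSeparableOn A) :
    ∃ A₁ A₂, A₁ ∪ A₂ = A ∧ G.TwoCut A₁ A₂ S e a b := by
  simp only [NonSeparableOn, not_forall, not_not] at hcon
  obtain ⟨A₁, A₂, hs, rfl⟩ := hcon
  have hV := hA.support_inter_subset_of_identify hs
  have hS : Disjoint S (G.support A₁ ∩ G.support A₂) :=
    Disjoint.mono_right hV (by simp [h.left_notMem, h.right_notMem])
  rcases h.isDominatingCore_deleteEdge.connectedOn.disjoint_support_or
    (Multigraph.edgesMeeting_subset G _ S) hS with hS | hS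
  · exact ⟨A₂, A₁, Finset.union_comm _ _, Finset.union_comm A₁ A₂ ▸ h, hs.disjoint.symm,
      Set.inter_comm _ _ ▸ hV, hS, hs.left_nonempty⟩
  · exact ⟨A₁, A₂, rfl, h, hs.disjoint, hV, hS, hs.right_nonempty⟩

theorem AvoidsCore.normFlow_pos_of_nonSeparableOn_identify (h : G.AvoidsCore A S e a b)
    (hq : q ≠ 0) (ih : NormFlowPosBelow V E q (insert e A).card) (hA : G.NonSeparableOn A)
    (hcon : (G.identify a b).NonSeparableOn A) (hadj : ∃ u ∈ S, G.edgeRelOn A a u) :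
    0 < normFlow ℚ q G.incVec (insert e A) := by
  have hcard := Finset.card_insert_of_notMem h.notMem
  have hker : LinearMap.ker (identifyMap a b) = Submodule.span ℚ {G.incVec e} :=
    (ker_identifyMap h.ne).trans h.isLink.span_incVec.symm
  rw [normFlow_insert hq h.notMem (h.isLink.incVec_ne_zero h.ne)
    (h.nonSeparableOn.incVec_mem_span h.notMem h.nonempty) hker, identifyMap_comp_incVec]
  have hcore := h.isDominatingCore_deleteEdge
  exact add_pos (ih G A S (by omega) h.two_le_card hA hcore)
    (ih _ A S (by omega) h.two_le_card hcon
      (hcore.identify h.left_notMem h.right_notMem h.ne hadj))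

theorem NonSeparableOn.exists_forall_isLink (h : G.NonSeparableOn A) (hA : 2 ≤ A.card)
    (hu : G.edgesMeeting A {u} = A) : ∃ w, u ≠ w ∧ ∀ e ∈ A, G.IsLink e u w := by
  have hmeet : ∀ f ∈ A, ∃ w, G.IsLink f u w := fun f hf =>
    (mem_edgesMeeting_singleton.1 (hu.symm.subset hf)).2
  obtain ⟨e, he⟩ := Finset.card_pos.1 (zero_lt_two.trans_le hA)
  obtain ⟨w, hw⟩ := hmeet e he
  have huw : u ≠ w := hw.ne (h.looplessOn hA e he)
  have hB : ∀ f ∈ G.edgesMeeting A {w}, G.IsLink f u w := fun f hf => by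
    obtain ⟨hfA, z, hz⟩ := mem_edgesMeeting_singleton.1 hf
    obtain ⟨y, hy⟩ := hmeet f hfA
    rw [(hz.eq_or_eq hy).resolve_left huw]
    exact hz.symm
  have hBA : G.edgesMeeting A {w} = A := by
    by_contra hne
    have hsupp : G.support (G.edgesMeeting A {w}) ⊆ {u, w} := by
      rintro v ⟨f, hf, z, hz⟩
      exact (hB f hf).eq_or_eq hz
    have hends := subset_of_not_subsingleton (h.not_subsingleton (edgesMeeting_subset G A {w})
      ⟨e, mem_edgesMeeting_singleton.2 ⟨he, u, hw.symm⟩⟩ hne) (Set.inter_subset_left.trans hsupp)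
    exact Set.disjoint_left.1 disjoint_support_sdiff_edgesMeeting (Set.mem_singleton w)
      (hends (Set.mem_insert_of_mem u rfl)).2
  exact ⟨w, huw, fun f hf => hB f (hBA.symm.subset hf)⟩

theorem NonSeparableOn.normFlow_pos_of_edgesMeeting_eq (h : G.NonSeparableOn A)
    (hA : 2 ≤ A.card) (hq₁ : 1 < q) (hq₂ : q < 2) (hu : G.edgesMeeting A {u} = A) :
    0 < normFlow ℚ q G.incVec A := by
  obtain ⟨w, huw, hlink⟩ := h.exists_forall_isLink hA hu
  exact VectorConfiguration.normFlow_pos_of_parallel hq₁ hq₂ (diffVec_ne_zero huw) hA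
    fun e he => (hlink e he).span_incVec

variable [Finite V]

theorem TwoCut.normFlow_left_eq_zero (h : G.TwoCut A₁ A₂ S e a b) (hq : q ≠ 0)
    (hA₁ : ¬ G.NonSeparableOn A₁) : normFlow ℚ q G.incVec A₁ = 0 := by
  obtain ⟨B₁, B₂, x, rfl, hs⟩ :=
    h.nonSeparableOn_insert_left.exists_separatesAt h.notMem_left h.isLink hA₁
  by_cases hx : x ∈ S
  · exact hs.normFlow_eq_zero hq h.looplessOn_left (h.isDominatingCore_left.degreeOn_le x hx)
  refine normFlow_union_eq_zero hs.disjoint hs.subsingleton ?_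
  have hl₁ : G.LooplessOn B₁ := fun g hg => h.looplessOn_left g (Finset.mem_union_left _ hg)
  have hl₂ : G.LooplessOn B₂ := fun g hg => h.looplessOn_left g (Finset.mem_union_right _ hg)
  have hxS : Disjoint S (G.support B₁ ∩ G.support B₂) := by
    rwa [hs.support_inter, Set.disjoint_singleton_right]
  refine (h.isDominatingCore_left.connectedOn.disjoint_support_or
    (Multigraph.edgesMeeting_subset G _ S) hxS).imp (fun hS => ?_) fun hS => ?_
  · exact normFlow_eq_zero_of_degreeOn_le_one hq hl₁ hs.left_mem (h.degreeOn_le_one hs hS)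
  · exact normFlow_eq_zero_of_degreeOn_le_one hq hl₂ hs.right_mem
      ((Finset.union_comm B₁ B₂ ▸ h).symm.degreeOn_le_one hs.symm hS)

theorem TwoCut.normFlow_pos (h : G.TwoCut A₁ A₂ S e a b) (hq₁ : 1 < q) (hq₂ : q < 2)
    (ih : NormFlowPosBelow V E q (insert e (A₁ ∪ A₂)).card)
    (hpos : 0 < normFlow ℚ q G.incVec (insert e A₂)) (hnonneg : 0 ≤ normFlow ℚ q G.incVec A₂) :
    0 < normFlow ℚ q G.incVec (insert e (A₁ ∪ A₂)) := by
  have hq : q ≠ 0 := by linarith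
  have hcard := h.card_insert
  have hcard₁ := Finset.card_insert_of_notMem h.notMem_left
  have hpos₁ := h.left_nonempty.card_pos
  have hpos₂ := h.right_nonempty.card_pos
  have h₁ : 0 < normFlow ℚ q G.incVec (insert e A₁) :=
    ih G _ S (by omega) (by omega) h.nonSeparableOn_insert_left h.isDominatingCore_insert_left
  have h₁' : 0 ≤ normFlow ℚ q G.incVec A₁ := by
    by_cases hns : G.NonSeparableOn A₁
    · exact ih.nonneg hq (by omega) h.left_nonempty h.looplessOn_left hns h.isDominatingCore_left
    · exact (h.normFlow_left_eq_zero hq hns).ge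
  have hspan : span ℚ G.incVec A₁ ⊓ span ℚ G.incVec A₂ ≤ Submodule.span ℚ {G.incVec e} := by
    rw [h.isLink.span_incVec]
    exact span_inf_span_le_span_diffVec h.support_inter_subset
  rw [normFlow_insert_union_of_inf_le_span hq hq₁.ne' h.notMem_left h.notMem_right h.disjoint
    (h.isLink.incVec_ne_zero h.ne)
    (h.nonSeparableOn_insert_left.incVec_mem_span h.notMem_left h.left_nonempty)
    (h.nonSeparableOn_insert_right.incVec_mem_span h.notMem_right h.right_nonempty) hspan]
  have : 0 < (2 - q) / (q - 1) := div_pos (by linarith) (by linarith)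
  positivity

theorem AvoidsCore.normFlow_pos_of_parallel (h : G.AvoidsCore A S e a b) (hq₁ : 1 < q)
    (hq₂ : q < 2) (ih : NormFlowPosBelow V E q (insert e A).card) (hf : f ∈ A)
    (hlf : G.IsLink f a b) : 0 < normFlow ℚ q G.incVec (insert e A) := by
  have hef : e ≠ f := fun hef => h.notMem (hef ▸ hf)
  have hS : Disjoint S (G.support {f}) := by
    simp [support_singleton hlf, h.left_notMem, h.right_notMem]
  obtain ⟨B, hfB, rfl⟩ : ∃ B, f ∉ B ∧ A = B ∪ {f} :=
    ⟨A.erase f, Finset.notMem_erase f A, by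
      rw [Finset.union_comm, ← Finset.insert_eq, Finset.insert_erase hf]⟩
  have hcut : G.TwoCut B {f} S e a b :=
    ⟨h, Finset.disjoint_singleton_right.2 hfB,
      Set.inter_subset_right.trans (support_singleton hlf).subset, hS, Finset.singleton_nonempty f⟩
  refine hcut.normFlow_pos hq₁ hq₂ ih ?_ (normFlow_singleton (by positivity)
    (hcut.looplessOn_right f (Finset.mem_singleton_self f))).ge
  refine VectorConfiguration.normFlow_pos_of_parallel hq₁ hq₂ (diffVec_ne_zero h.ne)
    (Finset.card_pair hef).ge ?_
  simp [h.isLink.span_incVec, hlf.span_incVec]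

theorem TwoCut.normFlow_right_nonneg (h : G.TwoCut A₁ A₂ S e a b) (hq : q ≠ 0)
    (ih : NormFlowPosBelow V E q (insert e (A₁ ∪ A₂)).card) (hv : v ∈ G.support A₂)
    (hva : v ≠ a) (hvb : v ≠ b) : 0 ≤ normFlow ℚ q G.incVec A₂ := by
  have hdeg : ∀ w, w ≠ a → w ≠ b → G.degreeOn A₂ w ≤ 3 := fun w hwa hwb =>
    (degreeOn_mono (Finset.subset_insert e A₂) w).trans (h.degreeOn_insert_right_le hwa hwb)
  by_cases hns : G.NonSeparableOn A₂
  · obtain ⟨T, hT⟩ := hns.exists_isDominatingCore hv hva hvb hdeg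
    have hcard := h.card_insert
    exact ih.nonneg hq (by omega) h.right_nonempty h.looplessOn_right hns hT
  · obtain ⟨B₁, B₂, x, rfl, hs⟩ :=
      h.nonSeparableOn_insert_right.exists_separatesAt h.notMem_right h.isLink hns
    exact (hs.normFlow_eq_zero hq h.looplessOn_right
      (hdeg x hs.left_ne.symm hs.right_ne.symm)).ge

theorem TwoCut.normFlow_pos_of_not_parallel (h : G.TwoCut A₁ A₂ S e a b) (hq₁ : 1 < q)
    (hq₂ : q < 2) (ih : NormFlowPosBelow V E q (insert e (A₁ ∪ A₂)).card)
    (hpar : ∀ f ∈ A₂, ¬ G.IsLink f a b) :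
    0 < normFlow ℚ q G.incVec (insert e (A₁ ∪ A₂)) := by
  obtain ⟨v, hv, hva, hvb⟩ := h.exists_mem_support_right hpar
  obtain ⟨T, hT⟩ := h.nonSeparableOn_insert_right.exists_isDominatingCore
    (support_mono G (Finset.subset_insert e A₂) hv) hva hvb
    fun w hwa hwb => h.degreeOn_insert_right_le hwa hwb
  have hcard := h.card_insert
  have hcard₂ := Finset.card_insert_of_notMem h.notMem_right
  have hpos₁ := h.left_nonempty.card_pos
  have hpos₂ := h.right_nonempty.card_pos
  exact h.normFlow_pos hq₁ hq₂ ih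
    (ih G _ T (by omega) (by omega) h.nonSeparableOn_insert_right hT)
    (h.normFlow_right_nonneg (by positivity) ih hv hva hvb)

theorem AvoidsCore.normFlow_pos_of_not_nonSeparableOn (h : G.AvoidsCore A S e a b) (hq₁ : 1 < q)
    (ih : NormFlowPosBelow V E q (insert e A).card) (hA : ¬ G.NonSeparableOn A) :
    0 < normFlow ℚ q G.incVec (insert e A) := by
  obtain ⟨A₁, A₂, x, rfl, hs⟩ := h.nonSeparableOn.exists_separatesAt h.notMem h.isLink hA
  have he := Finset.notMem_union.1 h.notMem
  obtain ⟨hmem₁, hpos₁⟩ := h.normFlow_reattach_pos hs ih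
  rw [Finset.union_comm] at h ih
  obtain ⟨hmem₂, hpos₂⟩ := h.symm.normFlow_reattach_pos hs.symm ih
  rw [normFlow_insert_union_of_disjoint (by positivity) hq₁.ne' he.1 he.2 hs.disjoint
    (disjoint_span hs.subsingleton) (endsEqOn_reattach he.1).eqOn_incVec
    (endsEqOn_reattach he.2).eqOn_incVec (h.isLink.incVec_reattach_add h.ne) hmem₁ hmem₂]
  have : 0 < q - 1 := by linarith
  positivity

theorem AvoidsCore.normFlow_pos (h : G.AvoidsCore A S e a b) (hq₁ : 1 < q) (hq₂ : q < 2)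
    (ih : NormFlowPosBelow V E q (insert e A).card) (hadj : ∃ u ∈ S, G.edgeRelOn A a u) :
    0 < normFlow ℚ q G.incVec (insert e A) := by
  by_cases hpar : ∃ f ∈ A, G.IsLink f a b
  · obtain ⟨f, hf, hlf⟩ := hpar
    exact h.normFlow_pos_of_parallel hq₁ hq₂ ih hf hlf
  by_cases hA : G.NonSeparableOn A
  · by_cases hcon : (G.identify a b).NonSeparableOn A
    · exact h.normFlow_pos_of_nonSeparableOn_identify (by positivity) ih hA hcon hadj
    · obtain ⟨A₁, A₂, rfl, hcut⟩ := h.exists_twoCut hA hcon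
      exact hcut.normFlow_pos_of_not_parallel hq₁ hq₂ ih fun f hf hlf =>
        hpar ⟨f, Finset.mem_union_right A₁ hf, hlf⟩
  · exact h.normFlow_pos_of_not_nonSeparableOn hq₁ ih hA

theorem NonSeparableOn.normFlow_pos_of_below (h : G.NonSeparableOn A) (hA : 2 ≤ A.card)
    (hS : G.IsDominatingCore A S) (hq₁ : 1 < q) (hq₂ : q < 2)
    (ih : NormFlowPosBelow V E q A.card) : 0 < normFlow ℚ q G.incVec A := by
  obtain ⟨S, hS, hsingle⟩ := hS.exists_eq_singleton (h.looplessOn hA)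
  by_cases hmeet : G.edgesMeeting A S = A
  · obtain ⟨u, rfl⟩ := hsingle hmeet
    exact h.normFlow_pos_of_edgesMeeting_eq hA hq₁ hq₂ hmeet
  obtain ⟨e, he, a, b, hl, ha, hb, u, hu, g, hg, hlg⟩ := h.exists_isLink_adj hS hmeet
  have hge : g ≠ e := by
    rintro rfl
    rcases hl.eq_or_eq (IsLink.symm hlg) with rfl | rfl
    exacts [ha hu, hb hu]
  have hins := Finset.insert_erase he
  have havoid : G.AvoidsCore (A.erase e) S e a b :=
    ⟨hins.symm ▸ h, hins.symm ▸ hS, Finset.notMem_erase e A, hl, ha, hb⟩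
  rw [← hins] at ih ⊢
  exact havoid.normFlow_pos hq₁ hq₂ ih ⟨u, hu, g, Finset.mem_erase.2 ⟨hge, hg⟩, hlg⟩

theorem normFlowPosBelow (hq₁ : 1 < q) (hq₂ : q < 2) (n : ℕ) : NormFlowPosBelow V E q n := by
  induction n with
  | zero => exact fun _ _ _ hn => absurd hn (Nat.not_lt_zero _)
  | succ n ih =>
    exact fun G A S hn hA h hS => h.normFlow_pos_of_below hA hS hq₁ hq₂
      fun H B T hB => ih H B T (hB.trans_le (Nat.lt_succ_iff.1 hn))

theorem NonSeparableOn.normFlow_pos (h : G.NonSeparableOn A) (hA : 2 ≤ A.card)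
    (hS : G.IsDominatingCore A S) (hq₁ : 1 < q) (hq₂ : q < 2) :
    0 < normFlow ℚ q G.incVec A :=
  normFlowPosBelow hq₁ hq₂ _ G A S (Nat.lt_succ_self _) hA h hS

end Induction

/-! ### Graphs without bridges -/

section Coloop

variable {G : Multigraph V E} {A A₁ A₂ : Finset E} {S : Set V} {y : V} {q : ℝ}

theorem isDominatingCore_singleton (hy : y ∈ G.support A)
    (h : ∀ v, 3 < G.degreeOn A v → v ≠ y ∧ G.edgeRelOn A v y) : G.IsDominatingCore A {y} where
  nonempty := Set.singleton_nonempty y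
  subset_support := Set.singleton_subset_iff.2 hy
  connectedOn := connectedOn_singleton G A y
  degreeOn_le v hv := not_lt.1 fun hlt => (h v hlt).1 hv
  exists_adj v hv := ⟨y, rfl, (h v hv).2⟩

theorem IsSeparation.exists_adj_support_inter (hs : G.IsSeparation A₁ A₂)
    (hA₁ : G.LooplessOn A₁) :
    ∃ y ∈ G.support A₁, ∀ v ∈ G.support A₁ ∩ G.support A₂, v ≠ y ∧ G.edgeRelOn A₁ v y := by
  rcases hs.subsingleton.eq_empty_or_singleton with hemp | ⟨x, hx⟩
  · obtain ⟨e, he⟩ := hs.left_nonempty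
    exact ⟨G.fst e, (G.isLink_fst_snd e).mem_support he, by simp [hemp]⟩
  · obtain ⟨e, he, y, hl⟩ := (hx.symm.subset rfl).1
    refine ⟨y, hl.symm.mem_support he, fun v hv => ?_⟩
    obtain rfl : v = x := hx.subset hv
    exact ⟨hl.ne (hA₁ e he), e, he, hl⟩

variable [DecidableEq E]

theorem IsDominatingCore.mem_support_right (h : G.IsDominatingCore (A₁ ∪ A₂) S)
    (hS : Disjoint S (G.support A₁)) {v : V} (hv : 3 < G.degreeOn A₁ v) :
    v ∈ G.support A₂ := by
  obtain ⟨u, hu, e, he, hl⟩ :=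
    h.exists_adj v (hv.trans_le (degreeOn_mono Finset.subset_union_left v))
  rcases Finset.mem_union.1 he with he | he
  · exact absurd (IsLink.mem_support (IsLink.symm hl) he) (Set.disjoint_left.1 hS hu)
  · exact IsLink.mem_support hl he

theorem IsSeparation.exists_isDominatingCore_left (hs : G.IsSeparation A₁ A₂)
    (hA₁ : G.LooplessOn A₁) (h : G.IsDominatingCore (A₁ ∪ A₂) S) :
    ∃ S', G.IsDominatingCore A₁ S' := by
  by_cases hne : (S ∩ G.support A₁).Nonempty
  · exact ⟨S ∩ G.support A₁, h.restrict (edgesMeeting_subset _ _ _) hs.subsingleton hne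
      subset_rfl (.refl G A₁) subset_rfl (degreeOn_mono Finset.subset_union_left)⟩
  · obtain ⟨y, hy, hadj⟩ := hs.exists_adj_support_inter hA₁
    refine ⟨{y}, isDominatingCore_singleton hy fun v hv => hadj v ⟨?_, ?_⟩⟩
    · exact mem_support_of_degreeOn_pos (by lia)
    · exact h.mem_support_right
        (Set.disjoint_iff_inter_eq_empty.2 (Set.not_nonempty_iff_eq_empty.1 hne)) hv

theorem two_le_card_of_coloopFree (hA : A.Nonempty) (hl : G.LooplessOn A)
    (hb : ColoopFree ℚ G.incVec A) : 2 ≤ A.card := by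
  by_contra! hcard
  have hpos := hA.card_pos
  obtain ⟨e, rfl⟩ : ∃ e, A = {e} := Finset.card_eq_one.1 (by lia)
  have hmem : G.incVec e ∈ span ℚ G.incVec ∅ := by
    simpa using hb e (Finset.mem_singleton_self e)
  refine (G.isLink_fst_snd e).incVec_ne_zero (hl e (Finset.mem_singleton_self e)) ?_
  simpa [span] using hmem

theorem flowSum_ne_zero [Finite V] (hl : G.LooplessOn A) (hb : ColoopFree ℚ G.incVec A)
    (hS : G.IsDominatingCore A S) (hq₁ : 1 < q) (hq₂ : q < 2) : flowSum ℚ q G.incVec A ≠ 0 := by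
  induction A using Finset.strongInduction generalizing S with | H A ih
  by_cases hns : G.NonSeparableOn A
  · obtain ⟨_, e, he, -⟩ := hS.nonempty.mono hS.subset_support
    exact mt normFlow_eq_zero.2
      (hns.normFlow_pos (two_le_card_of_coloopFree ⟨e, he⟩ hl hb) hS hq₁ hq₂).ne'
  simp only [NonSeparableOn, not_forall, not_not] at hns
  obtain ⟨A₁, A₂, hs, rfl⟩ := hns
  have key : ∀ B₁ B₂, G.IsSeparation B₁ B₂ → B₁ ∪ B₂ = A₁ ∪ A₂ →
      flowSum ℚ q G.incVec B₁ ≠ 0 := by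
    intro B₁ B₂ hB hBA
    rw [← hBA] at ih hl hb hS
    have hl₁ : G.LooplessOn B₁ := fun e he => hl e (Finset.mem_union_left _ he)
    obtain ⟨S', hS'⟩ := hB.exists_isDominatingCore_left hl₁ hS
    have hlt : B₁ ⊂ B₁ ∪ B₂ := Finset.ssubset_iff_subset_ne.2 ⟨Finset.subset_union_left, fun h =>
      hB.right_nonempty.ne_empty (hB.disjoint.symm.eq_bot_of_le (Finset.union_eq_left.1 h.symm))⟩
    exact ih B₁ hlt hl₁ (hb.left hB.disjoint (disjoint_span hB.subsingleton)) hS'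
  rw [flowSum_union_of_disjoint hs.disjoint (disjoint_span hs.subsingleton)]
  exact mul_ne_zero (key A₁ A₂ hs rfl) (key A₂ A₁ hs.symm (Finset.union_comm _ _))

end Coloop

/-! ### Components and the flow polynomial -/

section FlowPolynomial

variable {G : Multigraph V E} {F : Finset E} {a b : V}

theorem diffVec_mem_span_of_reach (h : G.Reach F a b) : diffVec a b ∈ span ℚ G.incVec F := by
  induction h with
  | rel a b h =>
    obtain ⟨e, he, hl⟩ := h
    exact (IsLink.incVec_mem hl).1 (mem_span ℚ he)
  | refl a => exact diffVec_self a ▸ zero_mem _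
  | symm a b _ ih => exact neg_diffVec a b ▸ neg_mem ih
  | trans a b c _ _ hab hbc => exact diffVec_add a b c ▸ add_mem hab hbc

open Classical in
/-- The linear map summing a function on the vertices over each connected component of the
spanning subgraph `(V, F)`. -/
noncomputable def componentSum [Fintype V] (G : Multigraph V E) (F : Finset E) :
    (V → ℚ) →ₗ[ℚ] (Quotient (G.reachSetoid F) → ℚ) :=
  Fintype.linearCombination ℚ fun v => Pi.single (Quotient.mk _ v) 1

open Classical in
theorem componentSum_single [Fintype V] (G : Multigraph V E) (F : Finset E) (v : V) :
    G.componentSum F (Pi.single v 1) = Pi.single (Quotient.mk _ v) 1 := by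
  rw [componentSum, Fintype.linearCombination_apply_single, one_smul]

theorem range_componentSum [Fintype V] (G : Multigraph V E) (F : Finset E) :
    LinearMap.range (G.componentSum F) = ⊤ := by
  classical
  rw [componentSum, Fintype.range_linearCombination, ← (Pi.basisFun ℚ _).span_eq,
    ← (Quotient.mk_surjective (s := G.reachSetoid F)).range_comp]
  congr
  ext
  simp

theorem ker_componentSum [Fintype V] (G : Multigraph V E) (F : Finset E) :
    LinearMap.ker (G.componentSum F) = span ℚ G.incVec F := by
  classical
  refine le_antisymm (fun f hf => ?_) ((span_le ℚ).2 fun e he => ?_)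
  · let rep (v : V) : V := (Quotient.mk (G.reachSetoid F) v).out
    have hrep : ∑ v, f v • (Pi.single (rep v) 1 : V → ℚ) = 0 := by
      have h := congrArg (Fintype.linearCombination ℚ fun c : Quotient (G.reachSetoid F) =>
        (Pi.single c.out 1 : V → ℚ)) (LinearMap.mem_ker.1 hf)
      simpa [componentSum, Fintype.linearCombination_apply _ _ f, rep,
        Fintype.linearCombination_apply_single] using h
    have hf : f = ∑ v, f v • diffVec v (rep v) := by
      simp only [diffVec, smul_sub, Finset.sum_sub_distrib, hrep, sub_zero]
      exact pi_eq_sum_univ' f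
    rw [hf]
    exact sum_mem fun v _ => Submodule.smul_mem _ _ (diffVec_mem_span_of_reach
      (Quotient.exact (Quotient.out_eq (Quotient.mk (G.reachSetoid F) v)).symm))
  · rw [LinearMap.mem_ker, incVec, diffVec, map_sub, componentSum_single, componentSum_single,
      sub_eq_zero, Quotient.sound (Relation.EqvGen.rel _ _ ⟨e, he, G.isLink_fst_snd e⟩)]

theorem ncomp_add_rank [Finite V] (G : Multigraph V E) (F : Finset E) :
    G.ncomp F + rank ℚ G.incVec F = Nat.card V := by
  classical
  cases nonempty_fintype V
  have h := (G.componentSum F).finrank_range_add_finrank_ker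
  rwa [range_componentSum, ker_componentSum, finrank_top, Module.finrank_pi, Module.finrank_pi,
    ← Nat.card_eq_fintype_card, ← Nat.card_eq_fintype_card] at h

theorem eval_flowPoly [Finite V] [Fintype E] (G : Multigraph V E) {q : ℝ} (hq : q ≠ 0) :
    G.flowPoly.eval q = (-1) ^ Fintype.card E * flowSum ℚ q G.incVec Finset.univ := by
  rw [flowPoly, flowSum, Polynomial.eval_finsetSum, Finset.mul_sum]
  refine Finset.sum_congr (by ext; simp) fun B _ => ?_
  have hexp : B.card + G.ncomp B - Nat.card V = B.card - rank ℚ G.incVec B := by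
    have := G.ncomp_add_rank B
    lia
  have hsign : (-1 : ℝ) ^ (Fintype.card E - B.card) = (-1) ^ Fintype.card E * (-1) ^ B.card := by
    rw [pow_sub₀ _ (by norm_num) (Finset.card_le_univ B), ← inv_pow]
    norm_num
  rw [hexp, weight, neg_pow q, inv_pow, Polynomial.eval_mul, Polynomial.eval_pow,
    Polynomial.eval_pow, Polynomial.eval_neg, Polynomial.eval_one, Polynomial.eval_X,
    Nat.card_eq_fintype_card, hsign, pow_sub₀ q hq (rank_le_card ℚ)]
  ring

theorem Bridgeless.coloopFree [Finite V] [Fintype E] [DecidableEq E] (h : G.Bridgeless) :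
    ColoopFree ℚ G.incVec Finset.univ := by
  intro e he
  have hcomp : G.ncomp (Finset.univ.erase e : Finset E) ≤ G.ncomp (Finset.univ : Finset E) := by
    have hne : {e' | e' ≠ e} = ((Finset.univ.erase e : Finset E) : Set E) := by ext; simp
    simpa [IsBridge, numComponents, hne] using h e
  have hrank : rank ℚ G.incVec Finset.univ ≤ rank ℚ G.incVec (Finset.univ.erase e) := by
    have := G.ncomp_add_rank Finset.univ
    have := G.ncomp_add_rank (Finset.univ.erase e)
    lia
  rw [Submodule.eq_of_le_of_finrank_le (span_mono ℚ (Finset.erase_subset e _)) hrank]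
  exact mem_span ℚ he

end FlowPolynomial

/-! ### The dominating component -/

section Component

variable {G : Multigraph V E} {A : Finset E} {S : Set V} {v v₀ w z : V}

theorem ConnectedOn.eq_singleton (h : G.ConnectedOn A S) (hz : z ∈ S) (hzA : z ∉ G.support A) :
    S = {z} := by
  by_contra hne
  obtain ⟨_, rfl, w, -, e, he, hl⟩ :=
    h {z} (Set.singleton_subset_iff.2 hz) (Set.singleton_nonempty z) (Ne.symm hne)
  exact hzA (IsLink.mem_support hl he)

theorem connectedOn_setOf_eqvGen {r : V → V → Prop}
    (hr : ∀ v w, r v w → v ≠ w → G.edgeRelOn A v w) (v₀ : V) :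
    G.ConnectedOn A {z | Relation.EqvGen r v₀ z} := by
  intro T hT ⟨t, ht⟩ hne
  by_contra! hcut
  have hT_closed : ∀ v w, r v w → (v ∈ T ↔ w ∈ T) := by
    intro v w hvw
    by_contra hiff
    have hvw' : v ≠ w := by rintro rfl; exact hiff Iff.rfl
    obtain ⟨e, he, hl⟩ := hr v w hvw hvw'
    by_cases hv : v ∈ T
    · have hw : w ∉ T := fun hw => hiff (iff_of_true hv hw)
      exact hcut v hv w ⟨(hT hv).trans _ _ _ (.rel _ _ hvw), hw⟩ ⟨e, he, hl⟩
    · have hw : w ∈ T := not_not.1 fun hw => hiff (iff_of_false hv hw)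
      exact hcut w hw v ⟨(hT hw).trans _ _ _ (.symm _ _ (.rel _ _ hvw)), hv⟩
        ⟨e, he, IsLink.symm hl⟩
  refine hne (hT.antisymm fun z hz => ?_)
  exact (iff_of_eqvGen hT_closed (.trans _ _ _ (.symm _ _ (hT ht)) hz)).1 ht

variable [Fintype E]

open Classical in
/-- The set of edges that are not loops. -/
noncomputable def nonloops (G : Multigraph V E) : Finset E :=
  {e | G.fst e ≠ G.snd e}

theorem mem_nonloops {e : E} : e ∈ G.nonloops ↔ G.fst e ≠ G.snd e := by
  simp [nonloops]

theorem incVec_eq_zero_of_notMem_nonloops {e : E} (he : e ∉ G.nonloops) : G.incVec e = 0 := by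
  rw [incVec, not_not.1 (mt mem_nonloops.2 he), diffVec_self]

theorem edgeRelOn_nonloops (h : G.edgeRelOn Set.univ v w) (hvw : v ≠ w) :
    G.edgeRelOn G.nonloops v w := by
  obtain ⟨e, -, hl⟩ := h
  exact ⟨e, mem_nonloops.2 (by grind), hl⟩

theorem degreeOn_nonloops_le (G : Multigraph V E) (v : V) :
    G.degreeOn G.nonloops v ≤ G.degree v := by
  classical
  refine (degreeOn_mono (Finset.subset_univ _) v).trans_eq ?_
  simp [degreeOn, degree, Finset.sum_add_distrib, Nat.card_eq_fintype_card, Fintype.card_subtype]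

theorem exists_isDominatingCore_nonloops {W : Set V} (hW : ∀ v ∉ W, G.degree v ≤ 3)
    (hv₀ : v₀ ∉ W)
    (hdom : ∀ w ∈ W, ∃ u,
      Relation.EqvGen (fun a b => a ∉ W ∧ b ∉ W ∧ G.edgeRelOn Set.univ a b) v₀ u ∧
        G.edgeRelOn Set.univ u w)
    (hne : G.nonloops.Nonempty) : ∃ S, G.IsDominatingCore G.nonloops S := by
  classical
  set r : V → V → Prop := fun a b => a ∉ W ∧ b ∉ W ∧ G.edgeRelOn Set.univ a b
  have hmem : ∀ z, Relation.EqvGen r v₀ z → z ∉ W := fun z hz =>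
    (iff_of_eqvGen (p := (· ∉ W)) (fun _ _ h => iff_of_true h.1 h.2.1) hz).1 hv₀
  have hdeg : ∀ v ∉ W, G.degreeOn G.nonloops v ≤ 3 := fun v hv =>
    (G.degreeOn_nonloops_le v).trans (hW v hv)
  have hconn := G.connectedOn_setOf_eqvGen (r := r)
    (fun _ _ h hne => edgeRelOn_nonloops h.2.2 hne) v₀
  have hadj : ∀ w ∈ W, ∃ u, Relation.EqvGen r v₀ u ∧ G.edgeRelOn G.nonloops w u := by
    intro w hw
    obtain ⟨u, hu, huw⟩ := hdom w hw
    obtain ⟨e, he, hl⟩ := edgeRelOn_nonloops huw fun h => hmem u hu (h ▸ hw)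
    exact ⟨u, hu, e, he, IsLink.symm hl⟩
  by_cases hsub : {z | Relation.EqvGen r v₀ z} ⊆ G.support G.nonloops
  · exact ⟨_, ⟨v₀, .refl v₀⟩, hsub, hconn, fun z hz => hdeg z (hmem z hz), fun w hw =>
      hadj w (not_not.1 fun h => hw.not_ge (hdeg w h))⟩
  · obtain ⟨z, hz, hzA⟩ := Set.not_subset.1 hsub
    have hW_empty : ∀ w, w ∉ W := by
      intro w hw
      obtain ⟨u, hu, e, he, hl⟩ := hadj w hw
      obtain rfl : u = z := (hconn.eq_singleton hz hzA).subset hu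
      exact hzA (IsLink.mem_support (IsLink.symm hl) he)
    obtain ⟨e, he⟩ := hne
    exact ⟨{G.fst e}, isDominatingCore_singleton ((G.isLink_fst_snd e).mem_support he)
      fun v hv => absurd (hdeg v (hW_empty v)) hv.not_ge⟩

end Component

end Multigraph

open Multigraph in
/-- Dong. Let `G` be a bridgeless finite multigraph and let
`W = W(G)` be the set of vertices of degree larger than `3`. If `G − W` has a
connected component `G₀` such that every vertex of `W` has a neighbour in `V(G₀)`,
then `G` has no flow root in `(1,2)`. -/
theorem flowPoly_ne_zero_of_component_dominating {V E : Type} [Fintype V] [Fintype E]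
    (G : Multigraph V E) (hbl : G.Bridgeless)
    (W : Set V) (hW : W = {v | 3 < G.degree v})
    (hcomp : ∃ v₀, v₀ ∉ W ∧ ∀ w ∈ W, ∃ u,
      Relation.EqvGen (fun a b => a ∉ W ∧ b ∉ W ∧ G.edgeRelOn Set.univ a b) v₀ u ∧
        G.edgeRelOn Set.univ u w) :
    ∀ q : ℝ, 1 < q → q < 2 → G.flowPoly.eval q ≠ 0 := by
  classical
  intro q hq₁ hq₂
  have hq : q ≠ 0 := by linarith
  obtain ⟨v₀, hv₀, hdom⟩ := hcomp
  have huniv : (Finset.univ : Finset E) = G.nonloopsᶜ ∪ G.nonloops := by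
    rw [Finset.union_comm, Finset.union_compl]
  have hflow : VectorConfiguration.flowSum ℚ q G.incVec G.nonloops ≠ 0 := by
    rcases G.nonloops.eq_empty_or_nonempty with hL | hL
    · simp [hL, VectorConfiguration.flowSum_empty]
    · obtain ⟨S, hS⟩ := exists_isDominatingCore_nonloops
        (fun v hv => not_lt.1 fun h => hv (hW ▸ h)) hv₀ hdom hL
      exact flowSum_ne_zero (fun _ => mem_nonloops.1) (hbl.coloopFree.of_subset
        (Finset.subset_univ _) fun _ _ => incVec_eq_zero_of_notMem_nonloops) hS hq₁ hq₂
  rw [eval_flowPoly G hq, huniv, VectorConfiguration.flowSum_union_of_eq_zero hq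
    disjoint_compl_left fun e he => incVec_eq_zero_of_notMem_nonloops (Finset.mem_compl.1 he)]
  exact mul_ne_zero (pow_ne_zero _ (by norm_num))
    (mul_ne_zero (pow_ne_zero _ (by linarith)) hflow)
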